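/- Let k ≥ 1 and let H ≤ S_{2·3^k} be the stabilizer of the partition of {1,…,2·3^k} into the two consecutive blocks of size 3^k (so H ≅ S_{3^k} ≀ S_2). Then there exists a bijection between Irr_{3'}(S_{2·3^k}) and Irr_{3'}(H). -/

import Mathlib

open scoped Classical

noncomputable section

/-- The set of irreducible complex characters of a group `G`. -/
def Irr (G : Type) [Group G] : Set (G → ℂ) :=
  {χ | ∃ V : FDRep ℂ G, CategoryTheory.Simple V ∧ FDRep.character V = χ}

/-- The set of irreducible complex characters of `G` whose degree is coprime to `p`. -/
def IrrCoprime (p : ℕ) (G : Type) [Group G] : Set (G → ℂ) :=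
  {χ | ∃ V : FDRep ℂ G, CategoryTheory.Simple V ∧ FDRep.character V = χ ∧
    Nat.Coprime (Module.finrank ℂ V) p}

/-!
Let `p` be an odd prime, `m = p ^ k`, and let `x` be an element of `p`-power order in a group `G`.
An integer `χ(x)` is congruent to `χ(1)` modulo `p`, so the irreducible characters of degree prime
to `p` are those with `χ(x)` prime to `p`. By column orthogonality, a family of orthonormal virtual
characters whose squared values at `x` add up to `|C_G(x)|` exhausts, up to signs, the irreducible
characters not vanishing at `x`. Such a family with values prime to `p` is therefore indexed by the
set we want to count, and it remains to find one for each group, with the same index set.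

For `S_m` and an `m`-cycle the `m` hook characters will do: they take the values `±1` and the
centralizer has order `m`. For `S_m ≀ S₂` and the pair `(x, x)` of `m`-cycles, the `2 * m`
extensions of the squares of hook characters and the `m.choose 2` characters induced from pairs
of distinct ones take the values `±1` and `±2`, and `2 * m + 4 * m.choose 2 = 2 * m ^ 2` is the
order of the centralizer. For `S_{2m}` and a product of two `m`-cycles, the characters of the
partitions with empty `m`-core have the same values up to sign.

The characters of symmetric groups are taken as the Jacobi-Trudi determinants in permutation
characters. Their orthonormality is Cauchy's determinant formula, compared coefficientwise.
-/

/-! ### Virtual characters -/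

/-- The group of virtual (generalized) characters of `G`, the `ℤ`-span of `Irr G`. -/
def virtualCharacters (G : Type) [Group G] : Submodule ℤ (G → ℂ) :=
  Submodule.span ℤ (Irr G)

/-- The bilinear form `|G| ⟨φ, ψ⟩` on functions on `G`, left unnormalized so that it is integral on
integer-valued functions. -/
def charPairing (G : Type) [Group G] [Fintype G] : LinearMap.BilinForm ℂ (G → ℂ) :=
  LinearMap.mk₂ ℂ (fun φ ψ => ∑ g, φ g * ψ g⁻¹)
    (fun _ _ _ => by simp only [Pi.add_apply, add_mul, Finset.sum_add_distrib])
    (fun _ _ _ => by simp only [Pi.smul_apply, smul_eq_mul, mul_assoc, Finset.mul_sum])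
    (fun _ _ _ => by simp only [Pi.add_apply, mul_add, Finset.sum_add_distrib])
    (fun _ _ _ => by simp only [Pi.smul_apply, smul_eq_mul, mul_left_comm, Finset.mul_sum])

theorem charPairing_apply {G : Type} [Group G] [Fintype G] (φ ψ : G → ℂ) :
    charPairing G φ ψ = ∑ g, φ g * ψ g⁻¹ :=
  rfl

theorem trace_eq_add_of_isCompl {K V : Type*} [Field K] [AddCommGroup V] [Module K V]
    [FiniteDimensional K V] {f : V →ₗ[K] V} {U W : Submodule K V} (h : IsCompl U W)
    (hU : ∀ v ∈ U, f v ∈ U) (hW : ∀ v ∈ W, f v ∈ W) :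
    LinearMap.trace K V f =
      LinearMap.trace K U (f.restrict hU) + LinearMap.trace K W (f.restrict hW) := by
  rw [← LinearMap.trace_prodMap', ← LinearMap.trace_conj' _ (Submodule.prodEquivOfIsCompl U W h)]
  congr 1
  ext v
  obtain ⟨u, rfl⟩ := (Submodule.prodEquivOfIsCompl U W h).surjective v
  simp [LinearEquiv.conj_apply]

section Decomposition

variable {G V : Type} [Group G] [AddCommGroup V] [Module ℂ V]

theorem character_mem_irr [Finite G] [FiniteDimensional ℂ V] (ρ : Representation ℂ G V)
    [ρ.IsIrreducible] : ρ.character ∈ Irr G := by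
  have := Fintype.ofFinite G
  have : Invertible (Nat.card G : ℂ) := invertibleOfNonzero (by simp)
  have horth := Representation.char_orthonormal ρ ρ
  rw [if_pos ⟨Representation.Equiv.refl ρ⟩, inv_mul_eq_one₀ (by simp)] at horth
  exact ⟨FDRep.of ρ, (FDRep.simple_iff_char_is_norm_one _).2 horth.symm, rfl⟩

theorem exists_nontrivial_isCompl_of_not_isIrreducible [Finite G] [Nontrivial V]
    {ρ : Representation ℂ G V} (h : ¬ ρ.IsIrreducible) :
    ∃ U W : Subrepresentation ρ, IsCompl U.toSubmodule W.toSubmodule ∧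
      U.toSubmodule ≠ ⊥ ∧ U.toSubmodule ≠ ⊤ := by
  have : Nontrivial (Subrepresentation ρ) :=
    ⟨⊥, ⊤, fun e => bot_ne_top (α := Submodule ℂ V) (congrArg Subrepresentation.toSubmodule e)⟩
  obtain ⟨U, hbot, htop⟩ : ∃ U : Subrepresentation ρ, U ≠ ⊥ ∧ U ≠ ⊤ := by
    by_contra! hU
    exact h ⟨fun U => or_iff_not_imp_left.2 (hU U)⟩
  obtain ⟨W, hUW⟩ := exists_isCompl U
  refine ⟨U, W, ⟨?_, ?_⟩, fun e => hbot (Subrepresentation.toSubmodule_injective e),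
    fun e => htop (Subrepresentation.toSubmodule_injective e)⟩
  · rw [disjoint_iff, ← Subrepresentation.toSubmodule_inf, hUW.inf_eq_bot]
    rfl
  · rw [codisjoint_iff, ← Subrepresentation.toSubmodule_sup, hUW.sup_eq_top]
    rfl

theorem character_eq_add_of_isCompl [FiniteDimensional ℂ V] {ρ : Representation ℂ G V}
    {U W : Subrepresentation ρ} (h : IsCompl U.toSubmodule W.toSubmodule) :
    ρ.character = U.toRepresentation.character + W.toRepresentation.character :=
  funext fun g => trace_eq_add_of_isCompl h (fun _ hv => U.apply_mem_toSubmodule g hv)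
    fun _ hv => W.apply_mem_toSubmodule g hv

end Decomposition

theorem character_mem_virtualCharacters {G : Type} [Group G] [Finite G] (n : ℕ) :
    ∀ {V : Type} [AddCommGroup V] [Module ℂ V] [FiniteDimensional ℂ V]
      (ρ : Representation ℂ G V), Module.finrank ℂ V = n → ρ.character ∈ virtualCharacters G := by
  induction n using Nat.strong_induction_on with
  | _ n ih =>
  intro V _ _ _ ρ hn
  rcases subsingleton_or_nontrivial V with hV | hV
  · have : ρ.character = 0 := by
      ext g
      rw [Representation.character, Subsingleton.elim (ρ g) 0, map_zero, Pi.zero_apply]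
    exact this ▸ zero_mem _
  by_cases hirr : ρ.IsIrreducible
  · exact Submodule.subset_span (character_mem_irr ρ)
  obtain ⟨U, W, hUW, hbot, htop⟩ := exists_nontrivial_isCompl_of_not_isIrreducible hirr
  have hsum := Submodule.finrank_add_eq_of_isCompl hUW
  have hU : Module.finrank ℂ U.toSubmodule < n := hn ▸ Submodule.finrank_lt htop
  have hpos : Module.finrank ℂ U.toSubmodule ≠ 0 := mt Submodule.finrank_eq_zero.1 hbot
  rw [character_eq_add_of_isCompl hUW]
  exact add_mem (ih _ hU U.toRepresentation rfl) (ih _ (by omega) W.toRepresentation rfl)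

section Orthogonality

variable {G : Type} [Group G] [Fintype G]

theorem charPairing_irr (χ ψ : Irr G) :
    charPairing G χ.1 ψ.1 = if χ = ψ then (Nat.card G : ℂ) else 0 := by
  obtain ⟨_, V, hV, rfl⟩ := χ
  obtain ⟨_, W, hW, rfl⟩ := ψ
  have : Invertible (Nat.card G : ℂ) := invertibleOfNonzero (by simp)
  have horth := FDRep.char_orthonormal V W
  rw [inv_mul_eq_iff_eq_mul₀ (by simp), mul_ite, mul_one, mul_zero] at horth
  have hiso : Nonempty (V ≅ W) ↔ V.character = W.character := by
    refine ⟨fun ⟨i⟩ => FDRep.char_iso i, fun e => by_contra fun hn => ?_⟩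
    rw [if_neg hn, ← e, (FDRep.simple_iff_char_is_norm_one V).1 hV] at horth
    simp at horth
  simpa only [charPairing_apply, Subtype.ext_iff, hiso] using horth

theorem charPairing_self_linearCombination (c : Irr G →₀ ℤ) :
    charPairing G (Finsupp.linearCombination ℤ Subtype.val c)
      (Finsupp.linearCombination ℤ Subtype.val c) =
        (Nat.card G : ℂ) * (∑ χ ∈ c.support, c χ ^ 2 : ℤ) := by
  simp only [Finsupp.linearCombination_apply, Finsupp.sum, map_sum, LinearMap.sum_apply,
    map_zsmul, LinearMap.smul_apply, charPairing_irr]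
  push_cast
  rw [Finset.mul_sum]
  refine Finset.sum_congr rfl fun χ hχ => ?_
  simp only [zsmul_eq_mul, mul_ite, mul_zero, Finset.sum_ite_eq', hχ, if_true]
  ring

theorem exists_irr_eq_or_eq_neg_of_charPairing_self {θ : G → ℂ} (hθ : θ ∈ virtualCharacters G)
    (hnorm : charPairing G θ θ = Nat.card G) : ∃ χ : Irr G, θ = χ.1 ∨ θ = -χ.1 := by
  obtain ⟨c, rfl⟩ := (Finsupp.mem_span_iff_linearCombination ℤ (Irr G) θ).1 hθ
  have hsq : ∑ χ ∈ c.support, c χ ^ 2 = 1 := by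
    rw [charPairing_self_linearCombination] at hnorm
    exact_mod_cast (mul_eq_left₀ (by simp)).1 hnorm
  have hpos : ∀ χ ∈ c.support, 1 ≤ c χ ^ 2 := fun χ hχ =>
    Int.add_one_le_iff.2 (sq_pos_of_ne_zero (Finsupp.mem_support_iff.1 hχ))
  obtain ⟨χ, hχ⟩ : ∃ χ, c.support = {χ} := by
    refine Finset.card_eq_one.1 (le_antisymm ?_ (Finset.card_pos.2 ?_))
    · simpa [hsq] using Finset.card_nsmul_le_sum _ _ _ hpos
    · exact Finset.nonempty_of_sum_ne_zero (hsq ▸ one_ne_zero)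
  rw [hχ, Finset.sum_singleton, sq_eq_one_iff] at hsq
  refine ⟨χ, ?_⟩
  rcases hsq with h | h <;>
    simp [Finsupp.linearCombination_apply, Finsupp.sum, hχ, h]

end Orthogonality

/-! ### Virtual permutation characters -/

/-- The sum of the weight `w` over the fixed points of `g` on the `G`-set `Y`; for an invariant
weight it is a virtual character of `G`. -/
def fixedPointSum {G Y : Type*} [Group G] [Fintype Y] (φ : G →* Equiv.Perm Y) (w : Y → ℤ)
    (g : G) : ℤ :=
  ∑ y, if φ g y = y then w y else 0

/-- The additive group generated by the permutation characters of `G`. Its elements are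
integer-valued, so complex conjugation (that is, inversion in `G`) can be ignored in all
orthogonality relations. -/
def virtualPermCharacters (G : Type) [Group G] : AddSubgroup (G → ℤ) :=
  AddSubgroup.closure {θ | ∃ (Y : Type) (_ : Fintype Y) (φ : G →* Equiv.Perm Y),
    θ = fixedPointSum φ 1}

section VirtualPermCharacters

variable {G : Type} [Group G]

theorem fixedPointSum_one_eq_ncard {Y : Type*} [Fintype Y] (φ : G →* Equiv.Perm Y) (g : G) :
    fixedPointSum φ 1 g = (Function.fixedPoints (φ g)).ncard := by
  simp [fixedPointSum, ← Set.ncard_coe_finset, Function.fixedPoints, Function.IsFixedPt]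

theorem fixedPointSum_inv {Y : Type*} [Fintype Y] (φ : G →* Equiv.Perm Y) (w : Y → ℤ) (g : G) :
    fixedPointSum φ w g⁻¹ = fixedPointSum φ w g := by
  simp only [fixedPointSum, map_inv, Equiv.Perm.inv_eq_iff_eq, eq_comm (a := φ g _)]

theorem fixedPointSum_one_conj {Y : Type*} [Fintype Y] (φ : G →* Equiv.Perm Y) (g h : G) :
    fixedPointSum φ 1 (h * g * h⁻¹) = fixedPointSum φ 1 g := by
  refine Fintype.sum_equiv (φ h⁻¹) _ _ fun y => ?_
  simp only [map_mul, map_inv, Equiv.Perm.mul_apply, Equiv.Perm.eq_inv_iff_eq, Pi.one_apply]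

theorem apply_inv_of_mem_virtualPermCharacters {θ : G → ℤ} (hθ : θ ∈ virtualPermCharacters G)
    (g : G) : θ g⁻¹ = θ g := by
  induction hθ using AddSubgroup.closure_induction with
  | mem _ h => obtain ⟨Y, _, φ, rfl⟩ := h; exact fixedPointSum_inv φ 1 g
  | zero => rfl
  | add _ _ _ _ h₁ h₂ => simp only [Pi.add_apply, h₁, h₂]
  | neg _ _ h => simp only [Pi.neg_apply, h]

theorem apply_conj_of_mem_virtualPermCharacters {θ : G → ℤ} (hθ : θ ∈ virtualPermCharacters G)
    (g h : G) : θ (h * g * h⁻¹) = θ g := by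
  induction hθ using AddSubgroup.closure_induction with
  | mem _ hθ => obtain ⟨Y, _, φ, rfl⟩ := hθ; exact fixedPointSum_one_conj φ g h
  | zero => rfl
  | add _ _ _ _ h₁ h₂ => simp only [Pi.add_apply, h₁, h₂]
  | neg _ _ h => simp only [Pi.neg_apply, h]

theorem coe_fixedPointSum_one_mem_virtualCharacters [Finite G] {Y : Type} [Fintype Y]
    (φ : G →* Equiv.Perm Y) :
    (fun g => (fixedPointSum φ 1 g : ℂ)) ∈ virtualCharacters G := by
  let ρ : Representation ℂ G (Y → ℂ) :=
    Matrix.toLinAlgEquiv'.toMonoidHom.comp ((Matrix.permMatrixHom (R := ℂ)).comp φ)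
  convert character_mem_virtualCharacters _ ρ rfl with g
  change _ = LinearMap.trace ℂ _ (Matrix.toLin' _)
  rw [← fixedPointSum_inv, fixedPointSum_one_eq_ncard, Matrix.trace_toLin'_eq, map_inv,
    Int.cast_natCast]
  exact (Matrix.trace_permutation _).symm

theorem coe_mem_virtualCharacters [Finite G] {θ : G → ℤ} (hθ : θ ∈ virtualPermCharacters G) :
    (fun g => (θ g : ℂ)) ∈ virtualCharacters G := by
  have hle : virtualPermCharacters G ≤
      (virtualCharacters G).toAddSubgroup.comap ((Int.castAddHom ℂ).compLeft G) := by
    refine (AddSubgroup.closure_le _).2 ?_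
    rintro _ ⟨Y, _, φ, rfl⟩
    exact coe_fixedPointSum_one_mem_virtualCharacters φ
  exact hle hθ

theorem fixedPointSum_one_mem_virtualPermCharacters {Y : Type} [Fintype Y]
    (φ : G →* Equiv.Perm Y) : fixedPointSum φ 1 ∈ virtualPermCharacters G :=
  AddSubgroup.subset_closure ⟨Y, _, φ, rfl⟩

theorem fixedPointSum_mem_virtualPermCharacters {Y : Type} [Fintype Y] (φ : G →* Equiv.Perm Y)
    {w : Y → ℤ} (hw : ∀ g y, w (φ g y) = w y) : fixedPointSum φ w ∈ virtualPermCharacters G := by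
  let level (n : ℤ) : G →* Equiv.Perm {y // w y = n} :=
    { toFun g := (φ g).subtypePerm fun y => by rw [hw]
      map_one' := by ext; simp
      map_mul' g h := Equiv.ext fun y => Subtype.ext (DFunLike.congr_fun (map_mul φ g h) y.1) }
  have hlevel (n : ℤ) (g : G) : n * fixedPointSum (level n) 1 g =
      ∑ y with w y = n, if φ g y = y then w y else 0 := by
    rw [fixedPointSum, Finset.mul_sum, ← Finset.sum_subtype_eq_sum_filter, Finset.subtype_univ]
    refine Finset.sum_congr rfl fun y _ => ?_
    simp [level, Subtype.ext_iff, y.2]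
  have hsum : fixedPointSum φ w = ∑ n ∈ Finset.univ.image w, n • fixedPointSum (level n) 1 := by
    ext g
    simp only [Finset.sum_apply, Pi.smul_apply, smul_eq_mul, hlevel]
    exact (Finset.sum_fiberwise_of_maps_to
      (fun y _ => Finset.mem_image_of_mem w (Finset.mem_univ y)) _).symm
  rw [hsum]
  exact sum_mem fun n _ => zsmul_mem (fixedPointSum_one_mem_virtualPermCharacters (level n)) n

theorem fixedPointSum_one_add {Y Z : Type*} [Fintype Y] [Fintype Z] (φ : G →* Equiv.Perm Y)
    (ψ : G →* Equiv.Perm Z) : fixedPointSum φ 1 + fixedPointSum ψ 1 =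
      fixedPointSum ((Equiv.Perm.sumCongrHom Y Z).comp (φ.prod ψ)) 1 := by
  ext g
  simp only [fixedPointSum, Pi.add_apply, Pi.one_apply, Fintype.sum_sum_type, MonoidHom.coe_comp,
    Function.comp_apply, MonoidHom.prod_apply, Equiv.Perm.sumCongrHom_apply,
    Equiv.Perm.sumCongr_apply, Sum.map_inl, Sum.map_inr, Sum.inl.injEq, Sum.inr.injEq]

theorem exists_eq_sub_of_mem_virtualPermCharacters {θ : G → ℤ}
    (hθ : θ ∈ virtualPermCharacters G) :
    ∃ (Y Z : Type) (_ : Fintype Y) (_ : Fintype Z) (φ : G →* Equiv.Perm Y)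
      (ψ : G →* Equiv.Perm Z), θ = fixedPointSum φ 1 - fixedPointSum ψ 1 := by
  induction hθ using AddSubgroup.closure_induction with
  | mem _ h =>
    obtain ⟨Y, _, φ, rfl⟩ := h
    exact ⟨Y, Empty, inferInstance, inferInstance, φ, 1, by ext g; simp [fixedPointSum]⟩
  | zero => exact ⟨Empty, Empty, inferInstance, inferInstance, 1, 1, (sub_self _).symm⟩
  | add _ _ _ _ h₁ h₂ =>
    obtain ⟨Y₁, Z₁, _, _, φ₁, ψ₁, rfl⟩ := h₁
    obtain ⟨Y₂, Z₂, _, _, φ₂, ψ₂, rfl⟩ := h₂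
    rw [sub_add_sub_comm, fixedPointSum_one_add, fixedPointSum_one_add]
    exact ⟨_, _, inferInstance, inferInstance, _, _, rfl⟩
  | neg _ _ h =>
    obtain ⟨Y, Z, _, _, φ, ψ, rfl⟩ := h
    exact ⟨Z, Y, _, _, ψ, φ, neg_sub _ _⟩

theorem sign_mul_mem_virtualPermCharacters (s : G →* ℤˣ) {θ : G → ℤ}
    (hθ : θ ∈ virtualPermCharacters G) :
    (fun g => (s g : ℤ)) * θ ∈ virtualPermCharacters G := by
  induction hθ using AddSubgroup.closure_induction with
  | mem _ h =>
    obtain ⟨Y, _, φ, rfl⟩ := h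
    let ψ : G →* Equiv.Perm (Y × ℤˣ) :=
      { toFun g := (φ g).prodCongr (Equiv.mulLeft (s g))
        map_one' := by ext <;> simp
        map_mul' g h := by ext <;> simp [mul_assoc] }
    have hψ : (fun g => (s g : ℤ)) * fixedPointSum φ 1 =
        fixedPointSum ψ 1 - fixedPointSum φ 1 := by
      ext g
      rw [Pi.sub_apply, Pi.mul_apply, eq_sub_iff_add_eq, ← add_one_mul]
      simp only [fixedPointSum, Fintype.sum_prod_type, Finset.mul_sum]
      refine Finset.sum_congr rfl fun y _ => ?_
      rcases Int.units_eq_one_or (s g) with h | h <;> simp [ψ, Prod.ext_iff, h]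
    rw [hψ]
    exact sub_mem (fixedPointSum_one_mem_virtualPermCharacters ψ)
      (fixedPointSum_one_mem_virtualPermCharacters φ)
  | zero => simpa only [mul_zero] using zero_mem (virtualPermCharacters G)
  | add _ _ _ _ h₁ h₂ => simpa only [mul_add] using add_mem h₁ h₂
  | neg _ _ h => simpa only [mul_neg] using neg_mem h

end VirtualPermCharacters

/-! ### Degrees modulo `p` -/

theorem multisetSum_pow_eq_card {R : Type*} [CommRing R] (p n : ℕ) [Fact p.Prime] [CharP R p]
    {s : Multiset R} (hs : ∀ μ ∈ s, μ ^ p ^ n = 1) : s.sum ^ p ^ n = s.card := by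
  rw [multiset_sum_pow_char_pow, Multiset.map_congr rfl hs, Multiset.map_const',
    Multiset.sum_replicate, nsmul_one]

theorem natCast_mem_nonunits_integralClosure {p : ℕ} (hp : p.Prime) :
    (p : integralClosure ℤ ℂ) ∈ nonunits (integralClosure ℤ ℂ) := by
  intro h
  rw [← map_natCast (algebraMap ℤ (integralClosure ℤ ℂ)), isUnit_map_iff] at h
  exact hp.ne_one (Nat.isUnit_iff.1 (Int.ofNat_isUnit.1 h))

theorem pow_eq_one_of_hasEigenvalue {K V : Type*} [Field K] [AddCommGroup V] [Module K V]
    {f : Module.End K V} {n : ℕ} (hf : f ^ n = 1) {μ : K} (hμ : f.HasEigenvalue μ) :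
    μ ^ n = 1 := by
  obtain ⟨v, hv⟩ := hμ.exists_hasEigenvector
  have h : (μ ^ n - 1) • v = 0 := by
    rw [sub_smul, ← hv.pow_apply, hf, one_smul, Module.End.one_apply, sub_self]
  exact sub_eq_zero.1 ((smul_eq_zero.1 h).resolve_right hv.2)

theorem exists_integral_eigenvalues {V : Type*} [AddCommGroup V] [Module ℂ V]
    [FiniteDimensional ℂ V] {f : Module.End ℂ V} {n : ℕ} (hn : n ≠ 0) (hf : f ^ n = 1) :
    ∃ s : Multiset (integralClosure ℤ ℂ), (∀ μ ∈ s, μ ^ n = 1) ∧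
      s.card = Module.finrank ℂ V ∧ (s.sum : ℂ) = LinearMap.trace ℂ V f := by
  have hsplit : f.charpoly.Splits := IsAlgClosed.splits _
  have hroot (μ) (hμ : μ ∈ f.charpoly.roots) : μ ^ n = 1 :=
    pow_eq_one_of_hasEigenvalue hf
      ((Module.End.hasEigenvalue_iff_isRoot_charpoly _ _).2 (Polynomial.mem_roots'.1 hμ).2)
  have hint (μ) (hμ : μ ∈ f.charpoly.roots) : μ ∈ integralClosure ℤ ℂ :=
    IsIntegral.of_pow (Nat.pos_of_ne_zero hn) (hroot μ hμ ▸ isIntegral_one)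
  refine ⟨f.charpoly.roots.attach.map fun μ => (⟨μ.1, hint μ.1 μ.2⟩ : integralClosure ℤ ℂ),
    ?_, ?_, ?_⟩
  · simp only [Multiset.mem_map, Multiset.mem_attach, true_and]
    rintro _ ⟨μ, rfl⟩
    exact Subtype.ext (hroot μ.1 μ.2)
  · rw [Multiset.card_map, Multiset.card_attach, ← hsplit.natDegree_eq_card_roots,
      LinearMap.charpoly_natDegree]
  · rw [Module.End.trace_eq_sum_roots_charpoly_of_splits hsplit, ← Subalgebra.val_apply,
      map_multiset_sum, Multiset.map_map]
    exact congrArg Multiset.sum (Multiset.attach_map_val _)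

theorem finrank_modEq_of_character_eq {G : Type} [Group G] {p : ℕ} (hp : p.Prime) {x : G} {k : ℕ}
    (hx : x ^ p ^ k = 1) (V : FDRep ℂ G) {a : ℤ} (ha : V.character x = a) :
    (Module.finrank ℂ V : ℤ) ≡ a [ZMOD p] := by
  have := Fact.mk hp
  let O := integralClosure ℤ ℂ
  let q := Ideal.Quotient.mk (Ideal.span {(p : O)})
  have : CharP (O ⧸ Ideal.span {(p : O)}) p :=
    CharP.quotient O p (natCast_mem_nonunits_integralClosure hp)
  obtain ⟨s, hs, hcard, hsum⟩ := exists_integral_eigenvalues (pow_ne_zero k hp.ne_zero)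
    (f := V.ρ x) (by rw [← map_pow, hx, map_one])
  have hsum : s.sum = (a : O) := Subtype.ext (by rw [hsum]; exact_mod_cast ha)
  have hpow : (s.map q).sum ^ p ^ k = (s.map q).card := by
    refine multisetSum_pow_eq_card p k ?_
    simp only [Multiset.mem_map]
    rintro _ ⟨μ, hμ, rfl⟩
    rw [← map_pow, hs μ hμ, map_one]
  rw [← map_multiset_sum, hsum, Multiset.card_map, hcard, map_intCast] at hpow
  have hmod : ((a ^ p ^ k : ℤ) : O ⧸ Ideal.span {(p : O)}) = (Module.finrank ℂ V : ℤ) := by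
    exact_mod_cast hpow
  rw [CharP.intCast_eq_intCast _ p, ← ZMod.intCast_eq_intCast_iff, Int.cast_pow,
    ZMod.pow_card_pow, ZMod.intCast_eq_intCast_iff] at hmod
  exact hmod.symm

theorem coprime_finrank_iff_not_dvd {G : Type} [Group G] {p : ℕ} (hp : p.Prime) {x : G} {k : ℕ}
    (hx : x ^ p ^ k = 1) (V : FDRep ℂ G) {a : ℤ} (ha : V.character x = a) :
    Nat.Coprime (Module.finrank ℂ V) p ↔ ¬ (p : ℤ) ∣ a := by
  rw [Nat.coprime_comm, hp.coprime_iff_not_dvd, ← Int.natCast_dvd_natCast,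
    (finrank_modEq_of_character_eq hp hx V ha).dvd_iff]

/-! ### Detecting families -/

/-- The number of `h : G` conjugating `x` to `g`, that is, `|C_G(x)|` times the indicator function
of the conjugacy class of `x`. -/
def conjCount {G : Type*} [Group G] [Fintype G] (x g : G) : ℤ :=
  Finset.card {h : G | h * x * h⁻¹ = g}

section ConjCount

variable {G : Type*} [Group G] [Fintype G] (x : G)

theorem conjCount_self : conjCount x x = Nat.card (Subgroup.centralizer {x}) := by
  rw [conjCount, Nat.card_eq_fintype_card, ← Fintype.card_subtype]
  norm_cast
  refine Fintype.card_congr (Equiv.subtypeEquivRight fun h => ?_)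
  rw [Subgroup.mem_centralizer_singleton_iff, mul_inv_eq_iff_eq_mul]

theorem conjCount_conj (h : G) : conjCount x (h * x * h⁻¹) = conjCount x x := by
  refine congrArg Nat.cast (Finset.card_equiv (Equiv.mulLeft h⁻¹) fun a => ?_)
  have hconj : h⁻¹ * a * x * (h⁻¹ * a)⁻¹ = h⁻¹ * (a * x * a⁻¹) * h := by group
  rw [Finset.mem_filter_univ, Finset.mem_filter_univ, Equiv.coe_mulLeft, hconj,
    ← eq_mul_inv_iff_mul_eq (a := _ * (a * x * a⁻¹)), inv_mul_eq_iff_eq_mul, mul_assoc h]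

theorem sum_conjCount_mul {R : Type*} [Ring R] {F : G → R}
    (hF : ∀ h, F (h * x * h⁻¹) = F x) :
    ∑ g, (conjCount x g : R) * F g = Nat.card G * F x := by
  simp only [conjCount, Finset.card_filter, Nat.cast_sum, Int.cast_sum, Finset.sum_mul]
  rw [Finset.sum_comm]
  simp [hF]

end ConjCount

/-- A family of orthonormal virtual permutation characters whose squares at `x` add up to (at
least, hence exactly) the order of the centralizer of `x`. By column orthogonality, up to signs its
members are then precisely the irreducible characters not vanishing at `x`. -/
structure IsDetecting {G : Type} [Group G] [Fintype G] (x : G) {ι : Type*} [Fintype ι]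
    (θ : ι → G → ℤ) : Prop where
  mem : ∀ i, θ i ∈ virtualPermCharacters G
  sum_mul : ∀ i j, ∑ g, θ i g * θ j g = if i = j then (Nat.card G : ℤ) else 0
  card_centralizer_le : (Nat.card (Subgroup.centralizer {x}) : ℤ) ≤ ∑ i, θ i x ^ 2

namespace IsDetecting

variable {G : Type} [Group G] [Fintype G] {x : G} {ι : Type*} [Fintype ι] {θ : ι → G → ℤ}

theorem sum_conjCount_mul_self (hθ : IsDetecting x θ) (i : ι) :
    ∑ g, conjCount x g * θ i g = Nat.card G * θ i x :=
  sum_conjCount_mul x fun h => apply_conj_of_mem_virtualPermCharacters (hθ.mem i) x h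

theorem sum_sq_sum_mul (hθ : IsDetecting x θ) :
    ∑ g, (∑ i, θ i x * θ i g) ^ 2 = Nat.card G * ∑ i, θ i x ^ 2 := by
  calc ∑ g, (∑ i, θ i x * θ i g) ^ 2
      = ∑ i, ∑ j, θ i x * θ j x * ∑ g, θ i g * θ j g := by
        simp only [sq, Finset.sum_mul_sum]
        rw [Finset.sum_comm]
        refine Finset.sum_congr rfl fun i _ => ?_
        rw [Finset.sum_comm]
        refine Finset.sum_congr rfl fun j _ => ?_
        rw [Finset.mul_sum]
        exact Finset.sum_congr rfl fun g _ => mul_mul_mul_comm ..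
    _ = Nat.card G * ∑ i, θ i x ^ 2 := by
        simp only [hθ.sum_mul, mul_ite, mul_zero, Finset.sum_ite_eq, Finset.mem_univ, if_true,
          Finset.mul_sum]
        exact Finset.sum_congr rfl fun i _ => by ring

theorem conjCount_eq_sum (hθ : IsDetecting x θ) (g : G) :
    conjCount x g = ∑ i, θ i x * θ i g := by
  have hcross : ∑ g, conjCount x g * ∑ i, θ i x * θ i g = Nat.card G * ∑ i, θ i x ^ 2 := by
    simp only [Finset.mul_sum]
    rw [Finset.sum_comm]
    refine Finset.sum_congr rfl fun i _ => ?_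
    simp only [mul_left_comm _ (θ i x), ← Finset.mul_sum, hθ.sum_conjCount_mul_self]
    ring
  have hsq : ∑ g, conjCount x g * conjCount x g =
      Nat.card G * Nat.card (Subgroup.centralizer {x}) := by
    rw [← conjCount_self]
    exact sum_conjCount_mul x (conjCount_conj x)
  have hle : ∑ g, (conjCount x g - ∑ i, θ i x * θ i g) ^ 2 ≤ 0 := by
    calc ∑ g, (conjCount x g - ∑ i, θ i x * θ i g) ^ 2
        = Nat.card G * (Nat.card (Subgroup.centralizer {x}) - ∑ i, θ i x ^ 2) := by
          simp only [sub_sq, Finset.sum_add_distrib, Finset.sum_sub_distrib, mul_assoc,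
            ← Finset.mul_sum, hcross, hθ.sum_sq_sum_mul]
          simp only [sq (conjCount x _), hsq]
          ring
      _ ≤ 0 := mul_nonpos_of_nonneg_of_nonpos (by positivity)
          (sub_nonpos.2 hθ.card_centralizer_le)
  have hzero := (Finset.sum_eq_zero_iff_of_nonneg fun g _ => sq_nonneg _).1
    (hle.antisymm (Finset.sum_nonneg fun g _ => sq_nonneg _)) g (Finset.mem_univ g)
  exact sub_eq_zero.1 (pow_eq_zero_iff two_ne_zero |>.1 hzero)

theorem character_inv_eq_zero (hθ : IsDetecting x θ) (V : FDRep ℂ G)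
    (hV : ∀ i, charPairing G (fun g => (θ i g : ℂ)) V.character = 0) : V.character x⁻¹ = 0 := by
  have hclass : ∑ g, (conjCount x g : ℂ) * V.character g⁻¹ = Nat.card G * V.character x⁻¹ :=
    sum_conjCount_mul x (F := fun g => V.character g⁻¹) fun h => by
      rw [← FDRep.char_conj V x⁻¹ h, mul_inv_rev, mul_inv_rev, inv_inv, mul_assoc]
  have hzero : ∑ g, (conjCount x g : ℂ) * V.character g⁻¹ = 0 := by
    simp only [hθ.conjCount_eq_sum, Int.cast_sum, Int.cast_mul, Finset.sum_mul]
    rw [Finset.sum_comm]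
    refine Finset.sum_eq_zero fun i _ => ?_
    simp only [mul_assoc, ← Finset.mul_sum]
    exact mul_eq_zero_of_right _ (hV i)
  exact (mul_eq_zero.1 (hclass ▸ hzero)).resolve_left (by simp)

theorem charPairing_coe (hθ : IsDetecting x θ) (i j : ι) :
    charPairing G (fun g => (θ i g : ℂ)) (fun g => (θ j g : ℂ)) =
      if i = j then (Nat.card G : ℂ) else 0 := by
  simp only [charPairing_apply, apply_inv_of_mem_virtualPermCharacters (hθ.mem j)]
  exact_mod_cast hθ.sum_mul i j

theorem exists_irr (hθ : IsDetecting x θ) (i : ι) :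
    ∃ χ : Irr G, (fun g => (θ i g : ℂ)) = χ.1 ∨ (fun g => (θ i g : ℂ)) = -χ.1 :=
  exists_irr_eq_or_eq_neg_of_charPairing_self (coe_mem_virtualCharacters (hθ.mem i))
    (by rw [hθ.charPairing_coe, if_pos rfl])

theorem nonempty_equiv_irrCoprime (hθ : IsDetecting x θ) {p k : ℕ} (hp : p.Prime)
    (hx : x ^ p ^ k = 1) (hdvd : ∀ i, ¬ (p : ℤ) ∣ θ i x) : Nonempty (ι ≃ IrrCoprime p G) := by
  choose χ hχ using hθ.exists_irr
  have hmem (i : ι) : (χ i).1 ∈ IrrCoprime p G := by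
    obtain ⟨V, hV, hVχ⟩ := (χ i).2
    refine ⟨V, hV, hVχ, ?_⟩
    rcases hχ i with h | h
    · exact (coprime_finrank_iff_not_dvd hp hx V (by rw [hVχ, ← h])).2 (hdvd i)
    · have hval : V.character x = (-θ i x : ℤ) := by
        rw [hVχ, Int.cast_neg, eq_neg_iff_add_eq_zero, ← eq_neg_iff_add_eq_zero.1 (congrFun h x),
          add_comm]
      exact (coprime_finrank_iff_not_dvd hp hx V hval).2 (mt dvd_neg.1 (hdvd i))
  refine ⟨Equiv.ofBijective (fun i => ⟨χ i, hmem i⟩) ⟨fun i j hij => ?_, ?_⟩⟩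
  · have hχij : χ i = χ j := Subtype.ext (Subtype.mk.inj hij)
    have hpair := hθ.charPairing_coe i j
    by_contra hne
    rcases hχ i with h | h <;> rcases hχ j with h' | h' <;>
      simp [h, h', hχij, hne, charPairing_irr] at hpair
  · rintro ⟨ψ, V, hV, hVψ, hψ⟩
    by_contra! hψχ
    have hzero : V.character x⁻¹ = 0 := hθ.character_inv_eq_zero V fun i => by
      have hne : χ i ≠ ⟨ψ, V, hV, hVψ⟩ := fun h =>
        hψχ i (Subtype.ext (congrArg (fun φ : Irr G => φ.1) h))
      have hpair := charPairing_irr (χ i) ⟨ψ, V, hV, hVψ⟩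
      rcases hχ i with h | h <;> simpa [h, hVψ, hne] using hpair
    exact (coprime_finrank_iff_not_dvd hp (x := x⁻¹) (a := 0) (by rw [inv_pow, hx, inv_one]) V
      (by rw [hzero, Int.cast_zero])).1 hψ (dvd_zero _)

end IsDetecting

/-! ### Colourings up to permutation -/

/-- The number of points of each colour in a colouring `f`. -/
def colourCount {α T : Type*} [Fintype α] (f : α → T) (t : T) : ℕ :=
  Fintype.card {a // f a = t}

section Colourings

variable {α S T : Type*} [Fintype α]

theorem colourCount_comp_perm (f : α → T) (σ : Equiv.Perm α) :
    colourCount (f ∘ σ) = colourCount f :=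
  funext fun _ => Fintype.card_congr (σ.subtypeEquiv fun _ => Iff.rfl)

theorem colourCount_comp [Fintype S] [DecidableEq T] (p : S → T) (f : α → S) (t : T) :
    colourCount (p ∘ f) t = ∑ s with p s = t, colourCount f s := by
  simp only [colourCount, Fintype.card_subtype]
  rw [Finset.card_eq_sum_card_fiberwise (f := f) (t := {s | p s = t}) fun a ha => by simpa using ha]
  refine Finset.sum_congr rfl fun s hs => ?_
  rw [Finset.filter_filter]
  congr! with a
  simp only [Function.comp_apply, and_iff_right_iff_imp]
  rintro rfl
  simpa using hs

theorem sum_colourCount [Fintype T] (f : α → T) : ∑ t, colourCount f t = Fintype.card α := by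
  rw [← Fintype.card_congr (Equiv.sigmaFiberEquiv f), Fintype.card_sigma]
  rfl

theorem exists_colourCount_eq [Fintype T] (A : T → ℕ) (hA : ∑ t, A t = Fintype.card α) :
    ∃ f : α → T, colourCount f = A := by
  let e : α ≃ Σ t, Fin (A t) := Fintype.equivOfCardEq (by simp [hA])
  refine ⟨fun a => (e a).1, funext fun t => ?_⟩
  rw [colourCount, Fintype.card_congr ((e.subtypeEquiv fun _ => Iff.rfl).trans
    (Equiv.sigmaSubtype t)), Fintype.card_fin]

theorem exists_perm_comp_eq {f g : α → T} (h : colourCount f = colourCount g) :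
    ∃ τ : Equiv.Perm α, g ∘ τ = f :=
  ⟨Equiv.ofFiberEquiv fun t => Fintype.equivOfCardEq (congrFun h t),
    funext (Equiv.ofFiberEquiv_map _)⟩

theorem card_perm_comp_eq {f g : α → T} (h : colourCount f = colourCount g) :
    Fintype.card {σ : Equiv.Perm α // f ∘ σ = f} =
      Fintype.card {σ : Equiv.Perm α // g ∘ σ = f} := by
  obtain ⟨τ, rfl⟩ := exists_perm_comp_eq h
  exact Fintype.card_congr ((Equiv.mulLeft τ).subtypeEquiv fun _ => Iff.rfl)

theorem sum_card_perm_comp_eq [Fintype T] {A : T → ℕ} (hA : ∑ t, A t = Fintype.card α) :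
    ∑ f : α → T with colourCount f = A, Fintype.card {σ : Equiv.Perm α // f ∘ σ = f} =
      Fintype.card (Equiv.Perm α) := by
  obtain ⟨g, rfl⟩ := exists_colourCount_eq A hA
  rw [Finset.sum_congr rfl fun f hf => card_perm_comp_eq (Finset.mem_filter.1 hf).2]
  simp only [Fintype.card_subtype]
  rw [← Finset.card_eq_sum_card_fiberwise (f := fun σ : Equiv.Perm α => g ∘ σ), Finset.card_univ]
  exact fun σ _ => by simpa using colourCount_comp_perm g σ

theorem sum_perm_sum_fixed_colouring [Fintype T] (Φ : (T → ℕ) → ℤ) :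
    ∑ σ : Equiv.Perm α, ∑ f : α → T, (if f ∘ σ = f then Φ (colourCount f) else 0) =
      Fintype.card (Equiv.Perm α) *
        ∑ A ∈ Finset.piAntidiag Finset.univ (Fintype.card α), Φ A := by
  have hmaps (f : α → T) (_ : f ∈ Finset.univ) :
      colourCount f ∈ Finset.piAntidiag Finset.univ (Fintype.card α) := by
    simpa using sum_colourCount f
  have hstab (f : α → T) :
      ∑ σ : Equiv.Perm α, (if f ∘ σ = f then Φ (colourCount f) else 0) =
        Fintype.card {σ : Equiv.Perm α // f ∘ σ = f} * Φ (colourCount f) := by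
    rw [← Finset.sum_filter, Finset.sum_const, nsmul_eq_mul, Fintype.card_subtype]
  rw [Finset.sum_comm, Finset.sum_congr rfl fun f _ => hstab f,
    ← Finset.sum_fiberwise_of_maps_to hmaps, Finset.mul_sum]
  refine Finset.sum_congr rfl fun A hA => ?_
  rw [← sum_card_perm_comp_eq (Finset.mem_piAntidiag.1 hA).1, Nat.cast_sum, Finset.sum_mul]
  exact Finset.sum_congr rfl fun f hf => by rw [(Finset.mem_filter.1 hf).2]

end Colourings

/-! ### Cauchy's determinant -/

section CauchyDeterminant

open Polynomial Matrix

variable {R : Type*} [CommRing R] {N : ℕ}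

theorem coeff_prod_erase_one_sub (y : Fin N → R) (j : Fin N) (k : ℕ) :
    (∏ l ∈ Finset.univ.erase j, (1 - X * C (y l))).coeff k =
      ∑ i ∈ Finset.range (k + 1), (∏ l, (1 - X * C (y l))).coeff (k - i) * y j ^ i := by
  rw [← Finset.mul_prod_erase _ _ (Finset.mem_univ j)]
  set Q := ∏ l ∈ Finset.univ.erase j, (1 - X * C (y l))
  have hrec (k : ℕ) : ((1 - X * C (y j)) * Q).coeff (k + 1) =
      Q.coeff (k + 1) - y j * Q.coeff k := by
    rw [sub_mul, one_mul, mul_assoc, coeff_sub, coeff_X_mul, coeff_C_mul]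
  induction k with
  | zero => simp [mul_coeff_zero]
  | succ k ih =>
    rw [Finset.sum_range_succ']
    simp only [Nat.add_sub_add_right, pow_succ', mul_left_comm _ (y j)]
    rw [← Finset.mul_sum, ← ih, Nat.sub_zero, pow_zero, mul_one, hrec]
    ring

theorem prod_erase_one_sub_eq_sum (x y : Fin N → R) (i j : Fin N) :
    ∏ l ∈ Finset.univ.erase j, (1 - x i * y l) =
      ∑ k : Fin N, x i ^ (k : ℕ) *
        (∏ l ∈ Finset.univ.erase j, (1 - X * C (y l))).coeff k := by
  have hdeg : (∏ l ∈ Finset.univ.erase j, (1 - X * C (y l))).natDegree < N := by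
    refine (natDegree_prod_le _ _).trans_lt ((Finset.sum_le_card_nsmul _ _ 1 fun l _ => ?_).trans_lt
      (by simpa using j.pos))
    compute_degree
  simp only [mul_comm (x i ^ _)]
  rw [Fin.sum_univ_eq_sum_range (fun k => Polynomial.coeff _ k * x i ^ k) N,
    ← eval_eq_sum_range' hdeg]
  simp [eval_prod, mul_comm (x i)]

theorem det_prod_erase_one_sub (x y : Fin N → R) :
    (of fun i j => ∏ l ∈ Finset.univ.erase j, (1 - x i * y l)).det =
      (vandermonde x).det * (vandermonde y).det := by
  let P : R[X] := ∏ l, (1 - X * C (y l))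
  let L : Matrix (Fin N) (Fin N) R := of fun k i => if i ≤ k then P.coeff (k - i) else 0
  have hL : L.det = 1 := by
    rw [det_of_isLowerTriangular L fun k i hki => if_neg (not_le.2 hki)]
    exact Finset.prod_eq_one fun i _ => by simp [L, P, coeff_zero_eq_eval_zero, eval_prod]
  have hfactor : (of fun i j => ∏ l ∈ Finset.univ.erase j, (1 - x i * y l)) =
      vandermonde x * (L * (vandermonde y)ᵀ) := by
    ext i j
    simp only [of_apply, prod_erase_one_sub_eq_sum, mul_apply, vandermonde_apply]
    refine Finset.sum_congr rfl fun k _ => congrArg _ ?_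
    rw [coeff_prod_erase_one_sub]
    simp only [L, of_apply, transpose_apply, vandermonde_apply, Fin.le_def, ite_mul, zero_mul]
    rw [Fin.sum_univ_eq_sum_range (fun i => if i ≤ k then P.coeff (k - i) * y j ^ i else 0) N,
      ← Finset.sum_filter]
    congr! 1
    grind
  rw [hfactor, det_mul, det_mul, hL, one_mul, det_transpose]

theorem det_mul_prod_eq_of_mul_one_sub_eq_one {x y : Fin N → R} {g : Fin N → Fin N → R}
    (hg : ∀ i j, g i j * (1 - x i * y j) = 1) :
    (of g).det = (vandermonde x).det * (vandermonde y).det * ∏ i, ∏ j, g i j := by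
  have hentry (i j : Fin N) :
      g i j = (∏ l, g i l) * ∏ l ∈ Finset.univ.erase j, (1 - x i * y l) := by
    rw [← Finset.mul_prod_erase _ _ (Finset.mem_univ j), mul_assoc, ← Finset.prod_mul_distrib,
      Finset.prod_eq_one fun l _ => hg i l, mul_one]
  rw [← det_prod_erase_one_sub, mul_comm, ← det_mul_column]
  exact congrArg det (Matrix.ext hentry)

end CauchyDeterminant

/-! ### Cauchy's identity on coefficients -/

/-- The geometric series `∑ₖ uᵏ` of the monomial `u` with exponent `e`. -/
def geometricSeries {σ : Type*} (e : σ →₀ ℕ) : MvPowerSeries σ ℤ :=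
  fun d => if ∃ k : ℕ, k • e = d then 1 else 0

/-- The exponent of `x ^ f * y ^ g` in the two families of variables `x` and `y`. -/
def biExponent {N : ℕ} (f g : Fin N → ℕ) : Fin N ⊕ Fin N →₀ ℕ :=
  Finsupp.equivFunOnFinite.symm (Sum.elim f g)

/-- The exponent of `x i * y j`, where `s = (i, j)`. -/
def cellExponent {N : ℕ} (s : Fin N × Fin N) : Fin N ⊕ Fin N →₀ ℕ :=
  Finsupp.single (Sum.inl s.1) 1 + Finsupp.single (Sum.inr s.2) 1

/-- The coefficient of `x ^ β` in `det (x i ^ j) * x ^ c`; it is `0`, `1` or `-1`. -/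
def alternantCoeff {N : ℕ} (β c : Fin N → ℕ) : ℤ :=
  ∑ w : Equiv.Perm (Fin N), if ∀ i, w i + c i = β i then (Equiv.Perm.sign w : ℤ) else 0

section CauchyIdentity

open MvPowerSeries

theorem coeff_geometricSeries {σ : Type*} (e d : σ →₀ ℕ) :
    coeff d (geometricSeries e) = if ∃ k : ℕ, k • e = d then 1 else 0 :=
  rfl

theorem geometricSeries_mul_one_sub {σ : Type*} {e : σ →₀ ℕ} (he : e ≠ 0) :
    geometricSeries e * (1 - monomial e 1) = 1 := by
  ext d
  rw [mul_sub, mul_one, map_sub, coeff_mul_monomial, coeff_one, sub_eq_iff_eq_add]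
  simp only [coeff_geometricSeries, mul_one]
  by_cases hed : e ≤ d
  · obtain ⟨d, rfl⟩ := exists_add_of_le hed
    have hne : e + d ≠ 0 := by simp [he]
    have hshift : (∃ k : ℕ, k • e = e + d) ↔ ∃ k : ℕ, k • e = d := by
      refine ⟨fun ⟨k, hk⟩ => ?_, fun ⟨k, hk⟩ => ⟨k + 1, by rw [succ_nsmul', hk]⟩⟩
      cases k with
      | zero => exact absurd (by rw [← hk, zero_smul]) hne
      | succ k => exact ⟨k, add_left_cancel ((succ_nsmul' e k).symm.trans hk)⟩
    simp only [hne, hed, hshift, add_tsub_cancel_left, if_true, if_false, zero_add]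
  · have hzero : (∃ k : ℕ, k • e = d) ↔ d = 0 := by
      refine ⟨fun ⟨k, hk⟩ => ?_, fun hd => ⟨0, by rw [hd, zero_smul]⟩⟩
      cases k with
      | zero => rw [← hk, zero_smul]
      | succ k => exact absurd (hk ▸ succ_nsmul' e k ▸ le_self_add) hed
    simp only [hed, hzero, if_false, add_zero]

theorem coeff_prod_geometricSeries {σ S : Type*} [Fintype S] {e : S → σ →₀ ℕ}
    (he : ∀ s, e s ≠ 0) (D : σ →₀ ℕ) :
    coeff D (∏ s, geometricSeries (e s)) = ({A : S → ℕ | ∑ s, A s • e s = D}.ncard : ℤ) := by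
  let multiples (A : S → ℕ) : S →₀ σ →₀ ℕ := Finsupp.equivFunOnFinite.symm fun s => A s • e s
  have hinj : Function.Injective multiples := fun A B h =>
    funext fun s => by
      obtain ⟨t, ht⟩ := Finsupp.ne_iff.1 (he s)
      exact Nat.eq_of_mul_eq_mul_right (Nat.pos_of_ne_zero ht)
        (DFunLike.congr_fun (DFunLike.congr_fun h s) t)
  simp only [coeff_prod, coeff_geometricSeries, Finset.prod_ite_zero, Finset.prod_const_one,
    Finset.sum_boole]
  rw [← Set.ncard_coe_finset, ← Set.ncard_image_of_injective _ hinj]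
  congr 2
  ext l
  simp only [Finset.coe_filter, Finset.mem_finsuppAntidiag, Set.mem_ofPred_eq, Set.mem_image]
  constructor
  · rintro ⟨⟨hsum, -⟩, hl⟩
    choose A hA using fun s => hl s (Finset.mem_univ s)
    exact ⟨A, by simp only [hA, hsum], Finsupp.ext hA⟩
  · rintro ⟨A, hA, rfl⟩
    exact ⟨⟨hA, Finset.subset_univ _⟩, fun s _ => ⟨A s, rfl⟩⟩

theorem coeff_monomial_mul_prod_geometricSeries {σ S : Type*} [Fintype S] {e : S → σ →₀ ℕ}
    (he : ∀ s, e s ≠ 0) (d D : σ →₀ ℕ) :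
    coeff D (monomial d 1 * ∏ s, geometricSeries (e s)) =
      ({A : S → ℕ | d + ∑ s, A s • e s = D}.ncard : ℤ) := by
  rw [coeff_monomial_mul, one_mul]
  split_ifs with hdD
  · obtain ⟨D, rfl⟩ := exists_add_of_le hdD
    simp only [add_tsub_cancel_left, coeff_prod_geometricSeries he, add_right_inj]
  · have hempty : {A : S → ℕ | d + ∑ s, A s • e s = D} = ∅ :=
      Set.eq_empty_of_forall_notMem fun A hA => hdD (hA ▸ le_self_add)
    rw [hempty, Set.ncard_empty, Nat.cast_zero]

theorem cellExponent_ne_zero {N : ℕ} (s : Fin N × Fin N) : cellExponent s ≠ 0 :=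
  Finsupp.ne_iff.2 ⟨Sum.inl s.1, by simp [cellExponent]⟩

theorem biExponent_add_sum_cellExponent_eq_iff {N : ℕ} {S : Type*} [Fintype S]
    (p : S → Fin N × Fin N) (A : S → ℕ) (f g β γ : Fin N → ℕ) :
    biExponent f g + ∑ s, A s • cellExponent (p s) = biExponent β γ ↔
      (∀ i, f i + ∑ s with (p s).1 = i, A s = β i) ∧
        ∀ j, g j + ∑ s with (p s).2 = j, A s = γ j := by
  simp [DFunLike.ext_iff, biExponent, cellExponent, Finsupp.single_apply, Finset.sum_filter]

theorem det_vandermonde_mul_det_vandermonde_eq_sum_monomial (N : ℕ) :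
    (Matrix.vandermonde fun i : Fin N =>
        (X (Sum.inl i) : MvPowerSeries (Fin N ⊕ Fin N) ℤ)).det *
      (Matrix.vandermonde fun i : Fin N =>
        (X (Sum.inr i) : MvPowerSeries (Fin N ⊕ Fin N) ℤ)).det =
      ∑ w : Equiv.Perm (Fin N), ∑ v : Equiv.Perm (Fin N),
        ((Equiv.Perm.sign w : ℤ) * (Equiv.Perm.sign v : ℤ)) •
          monomial (biExponent (fun i => w i) fun i => v i) 1 := by
  have hmonomial (w v : Equiv.Perm (Fin N)) :
      (∏ i, X (Sum.inl i) ^ (w i : ℕ)) * ∏ i, X (Sum.inr i) ^ (v i : ℕ) =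
        (monomial (biExponent (fun i => w i) fun i => v i) 1 :
          MvPowerSeries (Fin N ⊕ Fin N) ℤ) := by
    rw [monomial_one_eq, Finsupp.prod_fintype _ _ fun _ => pow_zero _, Fintype.prod_sum_type]
    rfl
  simp only [← Matrix.det_transpose (Matrix.vandermonde _), Matrix.det_apply',
    Finset.sum_mul_sum, ← hmonomial, zsmul_eq_mul, Int.cast_mul]
  exact Finset.sum_congr rfl fun w _ => Finset.sum_congr rfl fun v _ => mul_mul_mul_comm ..

theorem sum_sign_smul_monomial_mul_prod_geometricSeries (N : ℕ) :
    ∑ w : Equiv.Perm (Fin N), ∑ v : Equiv.Perm (Fin N),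
        ((Equiv.Perm.sign w : ℤ) * (Equiv.Perm.sign v : ℤ)) •
          (monomial (biExponent (fun i => w i) fun i => v i) 1 *
            ∏ s, geometricSeries (cellExponent s)) =
      ∑ w : Equiv.Perm (Fin N), (Equiv.Perm.sign w : ℤ) •
        ∏ i, geometricSeries (cellExponent (w i, i)) := by
  have hX (i j : Fin N) : (X (Sum.inl i) * X (Sum.inr j) : MvPowerSeries (Fin N ⊕ Fin N) ℤ) =
      monomial (cellExponent (i, j)) 1 := by
    rw [X, X, monomial_mul_monomial, mul_one, cellExponent]
  have hdet := det_mul_prod_eq_of_mul_one_sub_eq_one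
    (x := fun i : Fin N => (X (Sum.inl i) : MvPowerSeries (Fin N ⊕ Fin N) ℤ))
    (y := fun j => X (Sum.inr j)) (g := fun i j => geometricSeries (cellExponent (i, j)))
    fun i j => by rw [hX, geometricSeries_mul_one_sub (cellExponent_ne_zero _)]
  rw [det_vandermonde_mul_det_vandermonde_eq_sum_monomial, ← Fintype.prod_prod_type',
    Matrix.det_apply'] at hdet
  simpa only [Finset.sum_mul, smul_mul_assoc, zsmul_eq_mul, mul_assoc, Matrix.of_apply,
    Prod.mk.eta] using hdet.symm

theorem coeff_prod_geometricSeries_perm {N : ℕ} (β γ : Fin N → ℕ) (w : Equiv.Perm (Fin N)) :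
    coeff (biExponent β γ) (∏ i, geometricSeries (cellExponent (w i, i))) =
      if β ∘ w = γ then 1 else 0 := by
  have hcell (A : Fin N → ℕ) : ∑ i, A i • cellExponent (w i, i) = biExponent β γ ↔
      β ∘ w = A ∧ γ = A := by
    have hzero : (biExponent 0 0 : Fin N ⊕ Fin N →₀ ℕ) = 0 := by ext (i | i) <;> rfl
    have h := biExponent_add_sum_cellExponent_eq_iff (fun i => (w i, i)) A 0 0 β γ
    rw [hzero, zero_add, ← w.forall_congr_right] at h
    simpa [Finset.sum_filter, funext_iff, eq_comm] using h
  rw [coeff_prod_geometricSeries fun i => cellExponent_ne_zero (w i, i)]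
  simp only [hcell]
  split_ifs with hβγ
  · simp [hβγ, Set.ncard_singleton, eq_comm (a := γ)]
  · have hempty : {A | β ∘ w = A ∧ γ = A} = ∅ :=
      Set.eq_empty_of_forall_notMem fun A hA => hβγ (hA.1.trans hA.2.symm)
    rw [hempty, Set.ncard_empty, Nat.cast_zero]

theorem coeff_monomial_mul_prod_geometricSeries_cellExponent {N n : ℕ} {β : Fin N → ℕ}
    (γ : Fin N → ℕ) (hβ : ∑ i, β i = n + ∑ i : Fin N, (i : ℕ)) (w v : Equiv.Perm (Fin N)) :
    coeff (biExponent β γ) (monomial (biExponent (fun i => w i) fun i => v i) 1 *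
        ∏ s, geometricSeries (cellExponent s)) =
      ∑ A ∈ Finset.piAntidiag (Finset.univ : Finset (Fin N × Fin N)) n,
        if (∀ i, w i + ∑ s with s.1 = i, A s = β i) ∧ ∀ j, v j + ∑ s with s.2 = j, A s = γ j
          then 1 else 0 := by
  rw [coeff_monomial_mul_prod_geometricSeries cellExponent_ne_zero, Finset.sum_boole,
    ← Set.ncard_coe_finset]
  congr 2
  ext A
  refine (biExponent_add_sum_cellExponent_eq_iff id A _ _ β γ).trans ?_
  simp only [Finset.coe_filter, Set.mem_ofPred_eq, Finset.mem_piAntidiag, id,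
    iff_and_self, Finset.mem_univ, implies_true, and_true]
  rintro ⟨hrow, -⟩
  have hsum := Finset.sum_congr rfl fun i (_ : i ∈ Finset.univ) => hrow i
  rw [Finset.sum_add_distrib, Equiv.sum_comp w (fun i : Fin N => (i : ℕ)), hβ, add_comm,
    Nat.add_right_cancel_iff] at hsum
  rw [← hsum, Finset.sum_fiberwise]

theorem sum_alternantCoeff_mul_alternantCoeff {N n : ℕ} {β : Fin N → ℕ} (γ : Fin N → ℕ)
    (hβ : ∑ i, β i = n + ∑ i : Fin N, (i : ℕ)) :
    ∑ A ∈ Finset.piAntidiag Finset.univ n,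
        alternantCoeff β (fun i => ∑ s : Fin N × Fin N with s.1 = i, A s) *
          alternantCoeff γ (fun j => ∑ s : Fin N × Fin N with s.2 = j, A s) =
      ∑ w : Equiv.Perm (Fin N), if β ∘ w = γ then (Equiv.Perm.sign w : ℤ) else 0 := by
  have hcoeff := congrArg (coeff (biExponent β γ))
    (sum_sign_smul_monomial_mul_prod_geometricSeries N)
  simp only [map_sum, map_zsmul, coeff_prod_geometricSeries_perm,
    coeff_monomial_mul_prod_geometricSeries_cellExponent γ hβ, smul_eq_mul, mul_boole] at hcoeff
  simp only [← hcoeff, alternantCoeff, Finset.sum_mul_sum]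
  rw [Finset.sum_comm]
  refine Finset.sum_congr rfl fun w _ => ?_
  rw [Finset.sum_comm]
  refine Finset.sum_congr rfl fun v _ => ?_
  simp only [Finset.mul_sum, mul_boole, ite_zero_mul_ite_zero]

end CauchyIdentity

/-! ### Determinantal characters of symmetric groups -/

/-- The action of the permutations of `α` on the colourings of `α`. -/
def colouringAction (α T : Type*) : Equiv.Perm α →* Equiv.Perm (α → T) where
  toFun σ := σ.arrowCongr (Equiv.refl T)
  map_one' := rfl
  map_mul' _ _ := rfl

/-- The virtual character `det (h (β i - j))` of the symmetric group of `α`, where `h n` is the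
trivial character of the symmetric group of degree `n` and products are induction products. If `β`
is the set of beta numbers of a partition of `|α|`, it is the irreducible character attached to that
partition up to sign. -/
def determinantalCharacter {α : Type*} [Fintype α] {N : ℕ} (β : Fin N → ℕ) : Equiv.Perm α → ℤ :=
  fixedPointSum (colouringAction α (Fin N)) fun f => alternantCoeff β (colourCount f)

theorem colouringAction_apply_eq_self_iff {α T : Type*} (σ : Equiv.Perm α) (f : α → T) :
    colouringAction α T σ f = f ↔ f ∘ σ = f :=
  (Equiv.comp_symm_eq σ f f).trans eq_comm

theorem alternantCoeff_comp_colouringAction {α : Type*} [Fintype α] {N : ℕ} (β : Fin N → ℕ)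
    (σ : Equiv.Perm α) (f : α → Fin N) :
    alternantCoeff β (colourCount (colouringAction α (Fin N) σ f)) =
      alternantCoeff β (colourCount f) :=
  congrArg _ (colourCount_comp_perm f σ⁻¹)

theorem determinantalCharacter_mem_virtualPermCharacters {α : Type} [Fintype α] {N : ℕ}
    (β : Fin N → ℕ) :
    (determinantalCharacter β : Equiv.Perm α → ℤ) ∈ virtualPermCharacters (Equiv.Perm α) :=
  fixedPointSum_mem_virtualPermCharacters _ (alternantCoeff_comp_colouringAction β)

theorem determinantalCharacter_apply {α : Type*} [Fintype α] {N : ℕ} (β : Fin N → ℕ)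
    (σ : Equiv.Perm α) :
    determinantalCharacter β σ =
      ∑ f : α → Fin N, if f ∘ σ = f then alternantCoeff β (colourCount f) else 0 := by
  simp only [determinantalCharacter, fixedPointSum, colouringAction_apply_eq_self_iff]

theorem determinantalCharacter_mul {α : Type*} [Fintype α] {N : ℕ} (β γ : Fin N → ℕ)
    (σ : Equiv.Perm α) :
    determinantalCharacter β σ * determinantalCharacter γ σ =
      ∑ F : α → Fin N × Fin N, if F ∘ σ = F then
        alternantCoeff β (fun i => ∑ s with s.1 = i, colourCount F s) *
          alternantCoeff γ (fun j => ∑ s with s.2 = j, colourCount F s) else 0 := by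
  have hfst (F : α → Fin N × Fin N) :
      (fun i => ∑ s with s.1 = i, colourCount F s) = colourCount (Prod.fst ∘ F) :=
    funext fun i => (colourCount_comp Prod.fst F i).symm
  have hsnd (F : α → Fin N × Fin N) :
      (fun j => ∑ s with s.2 = j, colourCount F s) = colourCount (Prod.snd ∘ F) :=
    funext fun j => (colourCount_comp Prod.snd F j).symm
  simp only [determinantalCharacter_apply, Finset.sum_mul_sum, hfst, hsnd]
  rw [← Fintype.sum_prod_type', ← (Equiv.arrowProdEquivProdArrow α _ _).sum_comp]
  refine Finset.sum_congr rfl fun F _ => ?_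
  have hfixed : F ∘ σ = F ↔
      (Prod.fst ∘ F) ∘ σ = Prod.fst ∘ F ∧ (Prod.snd ∘ F) ∘ σ = Prod.snd ∘ F := by
    simp only [funext_iff, Function.comp_apply, Prod.ext_iff, forall_and]
  rw [ite_zero_mul_ite_zero]
  exact if_congr hfixed.symm rfl rfl

theorem sum_determinantalCharacter_mul {α : Type*} [Fintype α] {N : ℕ} {β : Fin N → ℕ}
    (γ : Fin N → ℕ) (hβ : ∑ i, β i = Fintype.card α + ∑ i : Fin N, (i : ℕ)) :
    ∑ σ : Equiv.Perm α, determinantalCharacter β σ * determinantalCharacter γ σ =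
      Fintype.card (Equiv.Perm α) *
        ∑ w : Equiv.Perm (Fin N), if β ∘ w = γ then (Equiv.Perm.sign w : ℤ) else 0 := by
  simp only [determinantalCharacter_mul]
  rw [← sum_alternantCoeff_mul_alternantCoeff γ hβ]
  convert sum_perm_sum_fixed_colouring (α := α) fun A : Fin N × Fin N → ℕ =>
    alternantCoeff β (fun i => ∑ s with s.1 = i, A s) *
      alternantCoeff γ (fun j => ∑ s with s.2 = j, A s)

theorem sum_determinantalCharacter_mul_eq_ite {α ι : Type*} [Fintype α] {N : ℕ}
    {β : ι → Fin N → ℕ} (hβ : ∀ c, ∑ i, β c i = Fintype.card α + ∑ i : Fin N, (i : ℕ))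
    (hinj : ∀ c, Function.Injective (β c)) (hrange : Function.Injective fun c => Set.range (β c))
    (c d : ι) :
    ∑ σ : Equiv.Perm α, determinantalCharacter (β c) σ * determinantalCharacter (β d) σ =
      if c = d then (Nat.card (Equiv.Perm α) : ℤ) else 0 := by
  rw [sum_determinantalCharacter_mul _ (hβ c), Nat.card_eq_fintype_card]
  split_ifs with hcd
  · subst hcd
    have hone (w : Equiv.Perm (Fin N)) : β c ∘ w = β c ↔ w = 1 := by
      rw [← Function.comp_id (β c), Function.comp_assoc, (hinj c).comp_left.eq_iff,
        Function.id_comp, ← Equiv.Perm.coe_one, DFunLike.coe_fn_eq]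
    simp [hone]
  · rw [Finset.sum_eq_zero, mul_zero]
    exact fun w _ => if_neg fun h => hcd (hrange (by simp only [← h, w.surjective.range_comp]))

theorem alternantCoeff_eq_sign {N : ℕ} {β c : Fin N → ℕ} {w : Equiv.Perm (Fin N)}
    (hw : ∀ i, w i + c i = β i) : alternantCoeff β c = Equiv.Perm.sign w := by
  have hunique (v : Equiv.Perm (Fin N)) : (∀ i, v i + c i = β i) ↔ v = w := by
    refine ⟨fun hv => Equiv.ext fun i => Fin.ext ?_, fun hv => hv ▸ hw⟩
    exact Nat.add_right_cancel ((hv i).trans (hw i).symm)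
  simp [alternantCoeff, hunique]

theorem alternantCoeff_eq_zero {N : ℕ} {β c : Fin N → ℕ}
    (h : ∀ w : Equiv.Perm (Fin N), ¬ ∀ i, w i + c i = β i) : alternantCoeff β c = 0 :=
  Finset.sum_eq_zero fun w _ => if_neg (h w)

/-! ### Products of cycles of equal length -/

/-- The permutation of `B × ZMod m` with one cycle of length `m` for each element of `B`. -/
def blockShift (B : Type*) (m : ℕ) : Equiv.Perm (B × ZMod m) :=
  (Equiv.refl B).prodCongr (Equiv.addRight 1)

section BlockShift

variable {B : Type*} {m : ℕ}

theorem blockShift_pow_apply (n : ℕ) (y : B × ZMod m) :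
    (blockShift B m ^ n) y = (y.1, y.2 + n) := by
  induction n with
  | zero => simp
  | succ n ih =>
    rw [pow_succ', Equiv.Perm.mul_apply, ih]
    simp [blockShift, add_assoc]

theorem blockShift_pow_self : blockShift B m ^ m = 1 := by
  ext y <;> simp [blockShift_pow_apply]

theorem blockShift_pow_val_apply_zero [NeZero m] (y : B × ZMod m) :
    (blockShift B m ^ y.2.val) (y.1, 0) = y := by
  simp [blockShift_pow_apply]

theorem eq_comp_fst_of_comp_blockShift_eq [NeZero m] {T : Type*} {f : B × ZMod m → T}
    (hf : f ∘ blockShift B m = f) : f = (fun r => f (r, 0)) ∘ Prod.fst := by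
  have hpow (n : ℕ) : f ∘ ⇑(blockShift B m ^ n) = f := by
    induction n with
    | zero => rfl
    | succ n ih => rw [pow_succ, Equiv.Perm.coe_mul, ← Function.comp_assoc, ih, hf]
  funext y
  exact ((congrFun (hpow y.2.val) (y.1, 0)).symm.trans
    (congrArg f (blockShift_pow_val_apply_zero y))).symm

theorem apply_eq_of_mem_centralizer_blockShift [NeZero m] {τ : Equiv.Perm (B × ZMod m)}
    (hτ : τ ∈ Subgroup.centralizer {blockShift B m}) (y : B × ZMod m) :
    τ y = ((τ (y.1, 0)).1, (τ (y.1, 0)).2 + y.2) := by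
  have hcomm : Commute τ (blockShift B m) := Subgroup.mem_centralizer_singleton_iff.1 hτ
  conv_lhs => rw [← blockShift_pow_val_apply_zero y]
  rw [← Equiv.Perm.mul_apply, (hcomm.pow_right _).eq, Equiv.Perm.mul_apply, blockShift_pow_apply,
    ZMod.natCast_zmod_val]

theorem card_centralizer_blockShift_le [Fintype B] [NeZero m] :
    Nat.card (Subgroup.centralizer {blockShift B m}) ≤
      (Fintype.card B).factorial * m ^ Fintype.card B := by
  have hsurj (τ : Subgroup.centralizer {blockShift B m}) :
      Function.Surjective fun r => (τ.1 (r, 0)).1 := fun r => by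
    obtain ⟨y, hy⟩ := τ.1.surjective (r, 0)
    exact ⟨y.1, congrArg Prod.fst ((apply_eq_of_mem_centralizer_blockShift τ.2 y).symm.trans hy)⟩
  let code (τ : Subgroup.centralizer {blockShift B m}) : Equiv.Perm B × (B → ZMod m) :=
    (Equiv.ofBijective _ (Finite.surjective_iff_bijective.1 (hsurj τ)), fun r => (τ.1 (r, 0)).2)
  have hcode : Function.Injective code := fun τ τ' h => by
    have hzero (r : B) : τ.1 (r, 0) = τ'.1 (r, 0) :=
      Prod.ext (DFunLike.congr_fun (congrArg Prod.fst h) r) (congrFun (congrArg Prod.snd h) r)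
    ext1
    ext1 y
    rw [apply_eq_of_mem_centralizer_blockShift τ.2, apply_eq_of_mem_centralizer_blockShift τ'.2,
      hzero]
  refine (Nat.card_le_card_of_injective code hcode).trans_eq ?_
  simp [Nat.card_eq_fintype_card, Fintype.card_perm]

theorem determinantalCharacter_blockShift [Fintype B] [NeZero m] {N : ℕ} (β : Fin N → ℕ) :
    determinantalCharacter β (blockShift B m) =
      ∑ g : B → Fin N, alternantCoeff β fun i => m * colourCount g i := by
  have hinj : Function.Injective fun g : B → Fin N => g ∘ (Prod.fst : B × ZMod m → B) :=
    Prod.fst_surjective.injective_comp_right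
  have hcount (g : B → Fin N) :
      colourCount (g ∘ (Prod.fst : B × ZMod m → B)) = fun i => m * colourCount g i := by
    funext i
    have hfibre (r : B) : colourCount (Prod.fst : B × ZMod m → B) r = m := by
      rw [colourCount, Fintype.card_congr (Equiv.prodSubtypeFstEquivSubtypeProd (p := (· = r))),
        Fintype.card_prod, Fintype.card_subtype_eq, one_mul, ZMod.card]
    rw [colourCount_comp, Finset.sum_congr rfl fun r _ => hfibre r, Finset.sum_const, smul_eq_mul,
      mul_comm, colourCount, Fintype.card_subtype]
  rw [determinantalCharacter_apply, ← Finset.sum_filter]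
  symm
  refine Finset.sum_nbij (· ∘ Prod.fst) ?_ hinj.injOn ?_ fun g _ => by rw [hcount]
  · exact fun g _ => by simp; rfl
  · intro f hf
    exact ⟨_, by simp, (eq_comp_fst_of_comp_blockShift_eq (by simpa using hf)).symm⟩

end BlockShift

/-! ### Beta numbers -/

/-- The set of beta numbers of a partition of `|B| * m` whose diagram is obtained from the empty one
by adding `|B|` rim hooks of length `m`: the `r`-th of them moves the bead at `g r`. -/
def betaNumbers {B : Type*} [Fintype B] (m : ℕ) {N : ℕ} (g : B → Fin N) (i : Fin N) : ℕ :=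
  i + m * colourCount g i

section BetaNumbers

variable {B : Type*} [Fintype B] {m N : ℕ} {g : B → Fin N}

theorem colourCount_pos_iff {α T : Type*} [Fintype α] {f : α → T} {t : T} :
    0 < colourCount f t ↔ t ∈ Set.range f :=
  Fintype.card_pos_iff.trans nonempty_subtype

theorem colourCount_eq_const_iff {α T : Type*} [Fintype α] {f : α → T} {t : T} :
    colourCount f = colourCount (fun _ : α => t) ↔ f = fun _ => t :=
  ⟨fun h => (exists_perm_comp_eq h).elim fun _ h => h.symm, fun h => h ▸ rfl⟩

theorem card_colourCount_eq_of_injective {α T : Type*} [Fintype α] {f : α → T}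
    (hf : Function.Injective f) :
    Nat.card {g : α → T // colourCount g = colourCount f} = (Fintype.card α).factorial := by
  rw [← Fintype.card_perm, ← Nat.card_eq_fintype_card]
  refine (Nat.card_eq_of_bijective
    (fun τ : Equiv.Perm α => ⟨f ∘ τ, colourCount_comp_perm f τ⟩) ⟨fun σ τ h => ?_, ?_⟩).symm
  · exact DFunLike.coe_injective (hf.comp_left (congrArg Subtype.val h))
  · exact fun g => (exists_perm_comp_eq g.2).imp fun τ h => Subtype.ext h

theorem sum_betaNumbers (g : B → Fin N) :
    ∑ i, betaNumbers m g i = Fintype.card B * m + ∑ i : Fin N, (i : ℕ) := by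
  simp only [betaNumbers, Finset.sum_add_distrib, ← Finset.mul_sum, sum_colourCount]
  ring

theorem le_of_add_mul_eq_betaNumbers (hg : ∀ r, N ≤ g r + m) {i j : Fin N} {b : ℕ}
    (h : j + m * b = betaNumbers m g i) : j ≤ i := by
  by_contra! hij
  have hlt : b < colourCount g i := by
    by_contra! hle
    have := Nat.mul_le_mul_left m hle
    simp only [betaNumbers] at h
    omega
  obtain ⟨r, rfl⟩ := colourCount_pos_iff.1 hlt.pos
  have := Nat.mul_le_mul_left m (Nat.succ_le_of_lt hlt)
  have := hg r
  simp only [betaNumbers, Nat.mul_succ] at *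
  omega

theorem betaNumbers_injective (hg : ∀ r, N ≤ g r + m) : Function.Injective (betaNumbers m g) :=
  fun _ _ h => le_antisymm (le_of_add_mul_eq_betaNumbers hg h)
    (le_of_add_mul_eq_betaNumbers hg h.symm)

theorem gaps_betaNumbers [NeZero m] (hg : ∀ r, N ≤ g r + m) :
    {t : Fin N | (t : ℕ) ∉ Set.range (betaNumbers m g)} = Set.range g := by
  ext t
  rw [← colourCount_pos_iff, Set.mem_ofPred_eq, pos_iff_ne_zero, not_iff_not]
  refine ⟨fun ⟨i, hi⟩ => ?_, fun ht => ⟨t, by simp [betaNumbers, ht]⟩⟩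
  have hit : i = t := le_antisymm (Fin.le_def.2 ((Nat.le_add_right _ _).trans_eq hi))
    (le_of_add_mul_eq_betaNumbers hg (b := 0) hi.symm)
  simpa [betaNumbers, hit, NeZero.ne m] using hi

theorem perm_eq_one_of_apply_le {w : Equiv.Perm (Fin N)} (hw : ∀ i, w i ≤ i) : w = 1 := by
  have hsum : ∑ i, (w i : ℕ) = ∑ i : Fin N, (i : ℕ) := Equiv.sum_comp w fun i => (i : ℕ)
  exact Equiv.ext fun i =>
    Fin.ext ((Finset.sum_eq_sum_iff_of_le fun i _ => Fin.le_def.1 (hw i)).1 hsum i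
      (Finset.mem_univ i))

theorem alternantCoeff_betaNumbers [NeZero m] (hg : ∀ r, N ≤ g r + m) (f : B → Fin N) :
    alternantCoeff (betaNumbers m g) (fun i => m * colourCount f i) =
      if colourCount f = colourCount g then 1 else 0 := by
  split_ifs with hfg
  · simpa using alternantCoeff_eq_sign (w := 1) fun i => by simp [betaNumbers, hfg]
  · refine alternantCoeff_eq_zero fun w hw => hfg (funext fun i => ?_)
    have hone : w = 1 := perm_eq_one_of_apply_le fun i => le_of_add_mul_eq_betaNumbers hg (hw i)
    simpa [betaNumbers, hone, NeZero.ne m] using hw i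

theorem determinantalCharacter_betaNumbers_blockShift [NeZero m] (hg : ∀ r, N ≤ g r + m) :
    determinantalCharacter (betaNumbers m g) (blockShift B m) =
      Nat.card {f : B → Fin N // colourCount f = colourCount g} := by
  simp [determinantalCharacter_blockShift, alternantCoeff_betaNumbers hg, Nat.card_eq_fintype_card,
    Fintype.card_subtype]

theorem isDetecting_determinantalCharacter_betaNumbers {B ι : Type} [Fintype B]
    [DecidableEq B] [Fintype ι] [NeZero m] {g : ι → B → Fin N}
    (hinj : ∀ c, Function.Injective (betaNumbers m (g c)))
    (hrange : Function.Injective fun c => Set.range (betaNumbers m (g c)))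
    (hcard : ((Fintype.card B).factorial * m ^ Fintype.card B : ℤ) ≤
      ∑ c, determinantalCharacter (betaNumbers m (g c)) (blockShift B m) ^ 2) :
    IsDetecting (blockShift B m) fun c => determinantalCharacter (betaNumbers m (g c)) where
  mem _ := determinantalCharacter_mem_virtualPermCharacters _
  sum_mul c d := by
    convert sum_determinantalCharacter_mul_eq_ite (α := B × ZMod m)
      (fun c => by rw [sum_betaNumbers, Fintype.card_prod, ZMod.card]) hinj hrange c d
  card_centralizer_le := hcard.trans' (mod_cast card_centralizer_blockShift_le)

end BetaNumbers

/-! ### Hook characters of the symmetric group of degree `m` -/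

section Hooks

variable {m : ℕ} [NeZero m]

theorem determinantalCharacter_hook (c : Fin m) :
    determinantalCharacter (betaNumbers m fun _ : Unit => c) (blockShift Unit m) = 1 := by
  rw [determinantalCharacter_betaNumbers_blockShift (by simp)]
  simp [colourCount_eq_const_iff]

theorem isDetecting_hook : IsDetecting (blockShift Unit m) fun c : Fin m =>
    determinantalCharacter (betaNumbers m fun _ : Unit => c) := by
  refine isDetecting_determinantalCharacter_betaNumbers
    (fun c => betaNumbers_injective (by simp)) (fun c d h => ?_)
    (by simp [determinantalCharacter_hook])
  have hcd := congrArg (fun R : Set ℕ => {t : Fin m | (t : ℕ) ∉ R}) h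
  simpa only [gaps_betaNumbers fun _ : Unit => Nat.le_add_left m _, Set.range_const,
    Set.singleton_eq_singleton_iff] using hcd

end Hooks

/-! ### Weight two characters of the symmetric group of degree `2 * m` -/

/-- The type indexing the characters of a wreath product `D ≀ S₂` that do not vanish at `(x, x)`
when `ι` indexes the characters of `D` not vanishing at `x`: the two extensions of `χ_c ⊗ χ_c` for
each `c`, and the character induced from `χ_a ⊗ χ_b` for each pair `a < b`. -/
abbrev WreathIndex (ι : Type*) [LT ι] : Type _ :=
  (ι × Bool) ⊕ {p : ι × ι // p.1 < p.2}

/-- The values at `(x, x)` of the characters of a wreath product `D ≀ S₂` indexed by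
`WreathIndex ι`, where `a c` is the value at `x` of the character `χ_c` of `D`. -/
def wreathValue {ι : Type*} [LT ι] (a : ι → ℤ) : WreathIndex ι → ℤ
  | Sum.inl e => a e.1 ^ 2
  | Sum.inr p => 2 * (a p.1.1 * a p.1.2)

theorem sum_sum_eq_sum_add_two_mul_sum_lt {ι : Type*} [Fintype ι] [LinearOrder ι]
    {f : ι → ι → ℤ} (hf : ∀ a b, f a b = f b a) :
    ∑ a, ∑ b, f a b = ∑ c, f c c + 2 * ∑ p : {p : ι × ι // p.1 < p.2}, f p.1.1 p.1.2 := by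
  have hsplit (a b : ι) : f a b = (if a = b then f a b else 0) +
      ((if a < b then f a b else 0) + if b < a then f a b else 0) := by
    rcases lt_trichotomy a b with h | rfl | h
    · simp [h, h.ne, h.not_gt]
    · simp
    · simp [h, h.ne', h.not_gt]
  have hlt : ∑ a, ∑ b, (if a < b then f a b else 0) =
      ∑ p : {p : ι × ι // p.1 < p.2}, f p.1.1 p.1.2 := by
    rw [← Fintype.sum_prod_type', ← Finset.sum_filter]
    exact Finset.sum_subtype _ (by simp) fun p : ι × ι => f p.1 p.2
  have hgt : ∑ a, ∑ b, (if b < a then f a b else 0) = ∑ a, ∑ b, if a < b then f a b else 0 := by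
    rw [Finset.sum_comm]
    exact Finset.sum_congr rfl fun a _ => Finset.sum_congr rfl fun b _ => by rw [hf]
  rw [Fintype.sum_congr _ _ fun a => Fintype.sum_congr _ _ (hsplit a)]
  simp only [Finset.sum_add_distrib, hgt, hlt, Finset.sum_ite_eq, Finset.mem_univ, if_true]
  ring

theorem sum_wreathValue_sq {ι : Type*} [Fintype ι] [LinearOrder ι] (a : ι → ℤ) :
    ∑ x, wreathValue a x ^ 2 = 2 * (∑ c, a c ^ 2) ^ 2 := by
  rw [sq (∑ c, a c ^ 2), Finset.sum_mul_sum,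
    sum_sum_eq_sum_add_two_mul_sum_lt fun b c => mul_comm (a b ^ 2) (a c ^ 2)]
  simp only [Fintype.sum_sum_type, Fintype.sum_prod_type, Fintype.sum_bool, wreathValue, mul_pow,
    ← Finset.mul_sum, Finset.sum_add_distrib]
  ring_nf

theorem not_dvd_wreathValue {ι : Type*} [LT ι] {p : ℕ} (hp : p.Prime) (hp2 : p ≠ 2) {a : ι → ℤ}
    (ha : ∀ c, ¬ (p : ℤ) ∣ a c) (x : WreathIndex ι) : ¬ (p : ℤ) ∣ wreathValue a x := by
  have hprime : Prime (p : ℤ) := Nat.prime_iff_prime_int.1 hp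
  have htwo : ¬ (p : ℤ) ∣ 2 := by
    exact_mod_cast (Nat.prime_dvd_prime_iff_eq hp Nat.prime_two).not.2 hp2
  cases x with
  | inl e => exact fun h => ha e.1 (hprime.dvd_of_dvd_pow h)
  | inr q => simp [wreathValue, hprime.dvd_mul, htwo, ha]

section PairCharacters

variable {m : ℕ}

/-- The beads moved to obtain the weight two partitions with empty `m`-core. The `2 * m` initial
beads lie two on each of the `m` runners, at `c` and `m + c`. -/
def movedBeads : WreathIndex (Fin m) → Bool → Fin (m + m)
  | Sum.inl (c, true) => fun _ => Fin.natAdd m c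
  | Sum.inl (c, false) => fun r => cond r (Fin.natAdd m c) (Fin.castAdd m c)
  | Sum.inr p => fun r => cond r (Fin.natAdd m p.1.1) (Fin.natAdd m p.1.2)

theorem colourCount_bool {T : Type*} (g : Bool → T) (t : T) :
    colourCount g t = (if g true = t then 1 else 0) + if g false = t then 1 else 0 := by
  rw [colourCount, Fintype.card_subtype, Finset.card_filter, Fintype.sum_bool]

theorem betaNumbers_movedBeads_false (c : Fin m) (i : Fin (m + m)) :
    betaNumbers m (movedBeads (Sum.inl (c, false))) i =
      if (i : ℕ) = c ∨ (i : ℕ) = m + c then i + m else i := by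
  have := c.isLt
  simp only [betaNumbers, movedBeads, colourCount_bool, Fin.ext_iff, cond_true, cond_false,
    Fin.val_natAdd, Fin.val_castAdd]
  split_ifs <;> omega

theorem le_add_movedBeads {x : WreathIndex (Fin m)} (hx : ∀ c, x ≠ Sum.inl (c, false)) (r : Bool) :
    m + m ≤ movedBeads x r + m := by
  match x with
  | Sum.inl (c, true) => simp [movedBeads]
  | Sum.inl (c, false) => exact absurd rfl (hx c)
  | Sum.inr p => cases r <;> simp [movedBeads]

theorem betaNumbers_movedBeads_injective :
    ∀ x : WreathIndex (Fin m), Function.Injective (betaNumbers m (movedBeads x))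
  | Sum.inl (c, true) => betaNumbers_injective (le_add_movedBeads (by simp))
  | Sum.inl (c, false) => fun i j h => by
    have := c.isLt
    rw [betaNumbers_movedBeads_false, betaNumbers_movedBeads_false] at h
    split_ifs at h <;> omega
  | Sum.inr p => betaNumbers_injective (le_add_movedBeads (by simp))

theorem gaps_betaNumbers_movedBeads [NeZero m] : ∀ x : WreathIndex (Fin m),
    {t : Fin (m + m) | (t : ℕ) ∉ Set.range (betaNumbers m (movedBeads x))} =
      match x with
      | Sum.inl (c, true) => {Fin.natAdd m c}
      | Sum.inl (c, false) => {Fin.castAdd m c}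
      | Sum.inr p => {Fin.natAdd m p.1.1, Fin.natAdd m p.1.2}
  | Sum.inl (c, true) => by
    exact (gaps_betaNumbers (le_add_movedBeads (by simp))).trans Set.range_const
  | Sum.inl (c, false) => by
    ext t
    simp only [Set.mem_ofPred_eq, Set.mem_range, betaNumbers_movedBeads_false, not_exists,
      Set.mem_singleton_iff, Fin.ext_iff, Fin.val_castAdd]
    refine ⟨fun h => ?_, fun h i => by split_ifs <;> have := NeZero.pos m <;> omega⟩
    by_contra htc
    have ht := h t
    split_ifs at ht with hti
    · have hc := h (Fin.castAdd m c)
      simp only [Fin.val_castAdd, true_or, if_true] at hc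
      omega
    · exact ht rfl
  | Sum.inr p => by
    exact (gaps_betaNumbers (le_add_movedBeads (by simp))).trans
      ((Bool.range_eq _).trans (Set.pair_comm _ _))

theorem range_betaNumbers_movedBeads_injective [NeZero m] :
    Function.Injective fun x : WreathIndex (Fin m) => Set.range (betaNumbers m (movedBeads x)) := by
  intro x y h
  have hxy := congrArg (fun R : Set ℕ => {t : Fin (m + m) | (t : ℕ) ∉ R}) h
  simp only [gaps_betaNumbers_movedBeads] at hxy
  rcases x with ⟨c, _ | _⟩ | ⟨⟨a, b⟩, hab⟩ <;> rcases y with ⟨d, _ | _⟩ | ⟨⟨a', b'⟩, hab'⟩ <;>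
    simp only [Set.Subset.antisymm_iff, Set.insert_subset_iff, Set.singleton_subset_iff,
      Set.mem_insert_iff, Set.mem_singleton_iff, Fin.ext_iff, Fin.val_natAdd, Fin.val_castAdd]
      at hxy <;> grind

theorem eq_one_or_eq_swap_of_add_mul_eq {c : Fin m} {n : Fin (m + m) → ℕ}
    {w : Equiv.Perm (Fin (m + m))}
    (hw : ∀ i, w i + m * n i = betaNumbers m (movedBeads (Sum.inl (c, false))) i) :
    w = 1 ∨ w = Equiv.swap (Fin.castAdd m c) (Fin.natAdd m c) := by
  have hval (i : Fin (m + m)) :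
      w i + m * n i = if (i : ℕ) = c ∨ (i : ℕ) = m + c then (i : ℕ) + m else i :=
    (hw i).trans (betaNumbers_movedBeads_false c i)
  have hmul (i : Fin (m + m)) : m * n i = 0 ∨ m ≤ m * n i :=
    (n i).eq_zero_or_pos.imp (fun h => by rw [h, mul_zero]) (Nat.le_mul_of_pos_right m)
  have hne : Fin.castAdd m c ≠ Fin.natAdd m c := by simp [Fin.ext_iff, c.pos.ne']
  have hle (i : Fin (m + m)) (hi : i ≠ Fin.castAdd m c) : w i ≤ i := by
    grind [Fin.val_castAdd, Fin.le_def]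
  have hlow : w (Fin.castAdd m c) ≤ Fin.castAdd m c ∨ w (Fin.castAdd m c) = Fin.natAdd m c := by
    have := hval (Fin.castAdd m c)
    grind [Fin.val_castAdd, Fin.val_natAdd, Fin.le_def]
  have hpre (i : Fin (m + m)) (hi : i ≠ Fin.castAdd m c) (h : w i = Fin.castAdd m c) :
      Fin.natAdd m c ≤ i := by
    grind [Fin.val_castAdd, Fin.val_natAdd, Fin.le_def]
  refine hlow.imp (fun h => perm_eq_one_of_apply_le fun i => ?_) fun h => ?_
  · by_cases hi : i = Fin.castAdd m c
    · exact hi ▸ h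
    · exact hle i hi
  · suffices hone : Equiv.swap (Fin.castAdd m c) (Fin.natAdd m c) * w = 1 by
      exact (eq_inv_of_mul_eq_one_right hone).trans (Equiv.swap_inv _ _)
    refine perm_eq_one_of_apply_le fun i => ?_
    rw [Equiv.Perm.mul_apply, Equiv.swap_apply_def]
    split_ifs with hlow' hup'
    · exact hpre i (by rintro rfl; exact hne (hlow'.symm.trans h)) hlow'
    · rw [w.injective (hup'.trans h.symm)]
    · exact hle i (by rintro rfl; exact hup' h)

theorem alternantCoeff_betaNumbers_movedBeads_false [NeZero m] (c : Fin m)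
    (f : Bool → Fin (m + m)) :
    alternantCoeff (betaNumbers m (movedBeads (Sum.inl (c, false))))
        (fun i => m * colourCount f i) =
      (if colourCount f = colourCount (movedBeads (Sum.inl (c, false))) then 1 else 0) -
        if colourCount f = colourCount (movedBeads (Sum.inl (c, true))) then 1 else 0 := by
  have hne : colourCount (movedBeads (Sum.inl (c, false))) ≠
      colourCount (movedBeads (Sum.inl (c, true))) := fun h => by
    simpa [movedBeads, Fin.ext_iff, NeZero.ne m] using
      congrFun (colourCount_eq_const_iff.1 h) false
  have hone (i : Fin (m + m)) : ((1 : Equiv.Perm (Fin (m + m))) i : ℕ) +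
      m * colourCount (movedBeads (Sum.inl (c, false))) i =
        betaNumbers m (movedBeads (Sum.inl (c, false))) i := rfl
  have hswap (i : Fin (m + m)) : Equiv.swap (Fin.castAdd m c) (Fin.natAdd m c) i +
      m * colourCount (movedBeads (Sum.inl (c, true))) i =
        betaNumbers m (movedBeads (Sum.inl (c, false))) i := by
    rw [betaNumbers_movedBeads_false, colourCount_bool, Equiv.swap_apply_def]
    grind [movedBeads, Fin.val_castAdd, Fin.val_natAdd]
  have hcancel {n n' : Fin (m + m) → ℕ} {w : Equiv.Perm (Fin (m + m))}
      (h : ∀ i, w i + m * n i = w i + m * n' i) : n = n' :=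
    funext fun i => Nat.eq_of_mul_eq_mul_left (NeZero.pos m) (Nat.add_left_cancel (h i))
  split_ifs with hfalse htrue htrue
  · exact absurd (hfalse.symm.trans htrue) hne
  · rw [hfalse, alternantCoeff_eq_sign hone]
    simp
  · rw [htrue, alternantCoeff_eq_sign hswap, Equiv.Perm.sign_swap]
    · rfl
    · simp [Fin.ext_iff, NeZero.ne m]
  · refine alternantCoeff_eq_zero fun w hw => ?_
    obtain rfl | rfl := eq_one_or_eq_swap_of_add_mul_eq hw
    · exact hfalse (hcancel hw)
    · exact htrue (hcancel fun i => (hw i).trans (hswap i).symm)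

theorem determinantalCharacter_movedBeads [NeZero m] (x : WreathIndex (Fin m)) :
    determinantalCharacter (betaNumbers m (movedBeads x)) (blockShift Bool m) =
      wreathValue (fun _ => 1) x := by
  have hne {a b : Fin (m + m)} (hab : a ≠ b) :
      Nat.card {f : Bool → Fin (m + m) // colourCount f = colourCount fun r => cond r a b} =
        2 := by
    refine (card_colourCount_eq_of_injective fun r s h => ?_).trans (by simp)
    cases r <;> cases s <;> simp_all
  match x with
  | Sum.inl (c, true) =>
    rw [determinantalCharacter_betaNumbers_blockShift (le_add_movedBeads (by simp))]
    simp [movedBeads, wreathValue, colourCount_eq_const_iff]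
  | Sum.inl (c, false) =>
    rw [determinantalCharacter_blockShift]
    simp only [alternantCoeff_betaNumbers_movedBeads_false, Finset.sum_sub_distrib,
      Finset.sum_boole, ← Fintype.card_subtype, ← Nat.card_eq_fintype_card]
    simp only [movedBeads, colourCount_eq_const_iff]
    rw [hne (by simp [Fin.ext_iff, NeZero.ne m])]
    simp [wreathValue]
  | Sum.inr p =>
    rw [determinantalCharacter_betaNumbers_blockShift (le_add_movedBeads (by simp))]
    simp only [movedBeads, wreathValue]
    rw [hne]
    · simp
    · simpa using p.2.ne

theorem isDetecting_movedBeads [NeZero m] : IsDetecting (blockShift Bool m)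
    fun x : WreathIndex (Fin m) => determinantalCharacter (betaNumbers m (movedBeads x)) :=
  isDetecting_determinantalCharacter_betaNumbers betaNumbers_movedBeads_injective
    range_betaNumbers_movedBeads_injective
    (by simp only [determinantalCharacter_movedBeads, sum_wreathValue_sq]; simp)

end PairCharacters

/-! ### Wreath products with the group of order two -/

open RegularWreathProduct

theorem forall_intUnits {P : ℤˣ → Prop} : (∀ q, P q) ↔ P 1 ∧ P (-1) :=
  ⟨fun h => ⟨h 1, h (-1)⟩, fun h q => (Int.units_eq_one_or q).elim (· ▸ h.1) (· ▸ h.2)⟩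

/-- A function on the group `ℤˣ` of order two as the pair of its values at `1` and `-1`. -/
def intUnitsArrowEquivProd (α : Type*) : (ℤˣ → α) ≃ α × α where
  toFun z := (z 1, z (-1))
  invFun p q := if q = 1 then p.1 else p.2
  left_inv z := funext <| forall_intUnits.2 (by simp)
  right_inv p := by simp

section WreathCharacters

variable {D : Type} [Group D]

/-- The two extensions (for `ε = 1` and `ε = -1`) of the character `θ ⊗ θ` of `D × D` to
`D ≀ S₂`. For `ε = 1` the top group interchanges the two tensor factors. -/
def tensorSquare (ε : ℤ) (θ : D → ℤ) (g : D ≀ᵣ ℤˣ) : ℤ :=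
  if g.right = 1 then θ (g.left 1) * θ (g.left (-1)) else ε * θ (g.left 1 * g.left (-1))

/-- The character of `D ≀ S₂` induced from the character `θ ⊗ η` of `D × D`. -/
def inducedTensor (θ η : D → ℤ) (g : D ≀ᵣ ℤˣ) : ℤ :=
  if g.right = 1 then θ (g.left 1) * η (g.left (-1)) + η (g.left 1) * θ (g.left (-1)) else 0

/-- The action of `D ≀ Q` on the functions from `Q` to a `D`-set. -/
def wreathPowerAction {Q Y : Type*} [Group Q] (φ : D →* Equiv.Perm Y) :
    D ≀ᵣ Q →* Equiv.Perm (Q → Y) :=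
  MonoidHom.toHomPerm
    { toFun g z q := φ (g.left q) (z (g.right⁻¹ * q))
      map_one' := by
        funext z q
        simp only [one_left, one_right, Pi.one_apply, map_one, inv_one, one_mul]
        rfl
      map_mul' g h := by
        funext z q
        simp only [mul_left, mul_right, Pi.mul_apply, map_mul, mul_inv_rev, mul_assoc]
        rfl }

theorem wreathPowerAction_apply {Q Y : Type*} [Group Q] (φ : D →* Equiv.Perm Y) (g : D ≀ᵣ Q)
    (z : Q → Y) (q : Q) : wreathPowerAction φ g z q = φ (g.left q) (z (g.right⁻¹ * q)) :=
  rfl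

theorem tensorSquare_fixedPointSum {Y : Type*} [Fintype Y] (φ : D →* Equiv.Perm Y) :
    tensorSquare 1 (fixedPointSum φ 1) = fixedPointSum (wreathPowerAction (Q := ℤˣ) φ) 1 := by
  ext g
  rw [fixedPointSum, ← (intUnitsArrowEquivProd Y).symm.sum_comp, Fintype.sum_prod_type]
  simp only [funext_iff, forall_intUnits, wreathPowerAction_apply]
  rcases Int.units_eq_one_or g.right with h | h
  · simp only [tensorSquare, h, if_true, fixedPointSum, Finset.sum_mul_sum, ite_zero_mul_ite_zero]
    simp [intUnitsArrowEquivProd]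
  · have hswap (y z : Y) : φ (g.left 1) z = y ∧ φ (g.left (-1)) y = z ↔
        φ (g.left (-1)) y = z ∧ φ (g.left 1) (φ (g.left (-1)) y) = y := by
      constructor <;> rintro ⟨rfl, h⟩ <;> exact ⟨by simp_all, by simp_all⟩
    simp [tensorSquare, h, fixedPointSum, intUnitsArrowEquivProd, hswap, ite_and]

theorem inducedTensor_eq_sub (θ η : D → ℤ) :
    inducedTensor θ η = tensorSquare 1 (θ + η) - tensorSquare 1 θ - tensorSquare 1 η := by
  ext g
  simp only [inducedTensor, tensorSquare, Pi.sub_apply, Pi.add_apply]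
  split_ifs <;> ring

theorem tensorSquare_sub (θ η : D → ℤ) :
    tensorSquare 1 (θ - η) = tensorSquare 1 θ + tensorSquare (-1) η - inducedTensor θ η := by
  ext g
  simp only [inducedTensor, tensorSquare, Pi.sub_apply, Pi.add_apply]
  split_ifs <;> ring

theorem tensorSquare_neg_one (θ : D → ℤ) :
    tensorSquare (-1) θ = (fun g => ((rightHom g : ℤˣ) : ℤ)) * tensorSquare 1 θ := by
  ext g
  rcases Int.units_eq_one_or g.right with h | h <;> simp [tensorSquare, h]

theorem tensorSquare_neg_one_mem_virtualPermCharacters {θ : D → ℤ}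
    (hθ : tensorSquare 1 θ ∈ virtualPermCharacters (D ≀ᵣ ℤˣ)) :
    tensorSquare (-1) θ ∈ virtualPermCharacters (D ≀ᵣ ℤˣ) :=
  tensorSquare_neg_one θ ▸ sign_mul_mem_virtualPermCharacters rightHom hθ

theorem tensorSquare_mem_virtualPermCharacters {θ : D → ℤ} (hθ : θ ∈ virtualPermCharacters D) :
    tensorSquare 1 θ ∈ virtualPermCharacters (D ≀ᵣ ℤˣ) := by
  have hperm {Y : Type} [Fintype Y] (φ : D →* Equiv.Perm Y) :
      tensorSquare 1 (fixedPointSum φ 1) ∈ virtualPermCharacters (D ≀ᵣ ℤˣ) :=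
    tensorSquare_fixedPointSum φ ▸ fixedPointSum_one_mem_virtualPermCharacters _
  obtain ⟨Y, Z, _, _, φ, ψ, rfl⟩ := exists_eq_sub_of_mem_virtualPermCharacters hθ
  rw [tensorSquare_sub, inducedTensor_eq_sub, fixedPointSum_one_add]
  exact sub_mem (add_mem (hperm φ) (tensorSquare_neg_one_mem_virtualPermCharacters (hperm ψ)))
    (sub_mem (sub_mem (hperm _) (hperm φ)) (hperm ψ))

theorem inducedTensor_mem_virtualPermCharacters {θ η : D → ℤ}
    (hθ : θ ∈ virtualPermCharacters D) (hη : η ∈ virtualPermCharacters D) :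
    inducedTensor θ η ∈ virtualPermCharacters (D ≀ᵣ ℤˣ) := by
  rw [inducedTensor_eq_sub]
  exact sub_mem (sub_mem (tensorSquare_mem_virtualPermCharacters (add_mem hθ hη))
    (tensorSquare_mem_virtualPermCharacters hθ)) (tensorSquare_mem_virtualPermCharacters hη)

end WreathCharacters

section Orthogonality

variable {D : Type} [Fintype D]

theorem sum_sum_tensor_mul_tensor (θ η θ' η' : D → ℤ) :
    ∑ a, ∑ b, θ a * η b * (θ' a * η' b) = (∑ a, θ a * θ' a) * ∑ b, η b * η' b := by
  simp only [Finset.sum_mul_sum, mul_mul_mul_comm (θ _)]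

variable [Fintype (D ≀ᵣ ℤˣ)]

theorem sum_wreath {M : Type*} [AddCommMonoid M]
    (A B : D → D → M) :
    ∑ g : D ≀ᵣ ℤˣ, (if g.right = 1 then A (g.left 1) (g.left (-1))
      else B (g.left 1) (g.left (-1))) = ∑ a, ∑ b, A a b + ∑ a, ∑ b, B a b := by
  let e : D ≀ᵣ ℤˣ ≃ (D × D) × ℤˣ :=
    (equivProd D ℤˣ).trans ((intUnitsArrowEquivProd D).prodCongr (Equiv.refl ℤˣ))
  have hsum : ∑ x : (D × D) × ℤˣ, (if x.2 = 1 then A x.1.1 x.1.2 else B x.1.1 x.1.2) =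
      ∑ a, ∑ b, A a b + ∑ a, ∑ b, B a b := by
    simp [Fintype.sum_prod_type, Finset.sum_add_distrib]
  rw [← hsum, ← e.sum_comp]
  rfl

theorem sum_inducedTensor_mul_inducedTensor (θ η θ' η' : D → ℤ) :
    ∑ g, inducedTensor θ η g * inducedTensor θ' η' g =
      2 * ((∑ a, θ a * θ' a) * ∑ a, η a * η' a) + 2 * ((∑ a, θ a * η' a) * ∑ a, η a * θ' a) := by
  simp only [inducedTensor, ite_mul_ite, mul_zero]
  rw [sum_wreath (fun a b => (θ a * η b + η a * θ b) * (θ' a * η' b + η' a * θ' b)) fun _ _ => 0]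
  simp only [mul_add, add_mul, Finset.sum_add_distrib, sum_sum_tensor_mul_tensor,
    Finset.sum_const_zero]
  ring

variable [Group D]

theorem sum_tensorSquare_mul_tensorSquare (ε δ : ℤ) (θ η : D → ℤ) :
    ∑ g, tensorSquare ε θ g * tensorSquare δ η g =
      (∑ a, θ a * η a) ^ 2 + ε * δ * (Fintype.card D * ∑ a, θ a * η a) := by
  have htop : ∑ a : D, ∑ b, ε * θ (a * b) * (δ * η (a * b)) =
      ε * δ * (Fintype.card D * ∑ a, θ a * η a) := by
    have hrow (a : D) : ∑ b, ε * θ (a * b) * (δ * η (a * b)) = ε * δ * ∑ b, θ b * η b := by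
      rw [Finset.mul_sum, ← Equiv.sum_comp (Equiv.mulLeft a) fun b => ε * δ * (θ b * η b)]
      exact Finset.sum_congr rfl fun b _ => mul_mul_mul_comm ..
    simp only [hrow, Finset.sum_const, Finset.card_univ, nsmul_eq_mul]
    ring
  simp only [tensorSquare, ite_mul_ite]
  rw [sum_wreath (fun a b => θ a * θ b * (η a * η b))
    (fun a b => ε * θ (a * b) * (δ * η (a * b))), htop,
    sum_sum_tensor_mul_tensor, sq]

theorem sum_tensorSquare_mul_inducedTensor (ε : ℤ) (θ η ζ : D → ℤ) :
    ∑ g, tensorSquare ε θ g * inducedTensor η ζ g =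
      2 * ((∑ a, θ a * η a) * ∑ a, θ a * ζ a) := by
  simp only [tensorSquare, inducedTensor, ite_mul_ite, mul_zero]
  rw [sum_wreath (fun a b => θ a * θ b * (η a * ζ b + ζ a * η b)) fun _ _ => 0]
  simp only [mul_add, Finset.sum_add_distrib, sum_sum_tensor_mul_tensor, Finset.sum_const_zero]
  ring

end Orthogonality

/-- The diagonal embedding of `D` in the base group of `D ≀ Q`. -/
def wreathDiagonal (D Q : Type*) [Group D] [Group Q] : D →* D ≀ᵣ Q where
  toFun x := ⟨fun _ => x, 1⟩
  map_one' := rfl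
  map_mul' x y := by ext <;> simp

theorem card_centralizer_wreathDiagonal {D Q : Type*} [Group D] [Group Q] [Finite Q] (x : D) :
    Nat.card (Subgroup.centralizer {wreathDiagonal D Q x}) =
      Nat.card (Subgroup.centralizer {x}) ^ Nat.card Q * Nat.card Q := by
  have hcomm (g : D ≀ᵣ Q) : g ∈ Subgroup.centralizer {wreathDiagonal D Q x} ↔
      ∀ q, g.left q ∈ Subgroup.centralizer {x} := by
    simp [Subgroup.mem_centralizer_singleton_iff, wreathDiagonal, RegularWreathProduct.ext_iff,
      funext_iff]
  rw [← RegularWreathProduct.card]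
  exact Nat.card_congr
    { toFun g := ⟨fun q => ⟨g.1.left q, (hcomm g.1).1 g.2 q⟩, g.1.right⟩
      invFun g := ⟨⟨fun q => g.left q, g.right⟩, (hcomm _).2 fun q => (g.left q).2⟩
      left_inv _ := rfl
      right_inv _ := rfl }

/-- The family of characters of `D ≀ S₂` built from a family of characters of `D`. -/
def wreathCharacter {D : Type} [Group D] {ι : Type*} [LT ι] (θ : ι → D → ℤ) :
    WreathIndex ι → D ≀ᵣ ℤˣ → ℤ
  | Sum.inl e => tensorSquare (cond e.2 1 (-1)) (θ e.1)
  | Sum.inr p => inducedTensor (θ p.1.1) (θ p.1.2)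

theorem wreathCharacter_wreathDiagonal {D : Type} [Group D] {ι : Type*} [LT ι] (θ : ι → D → ℤ)
    (x : D) : ∀ i, wreathCharacter θ i (wreathDiagonal D ℤˣ x) = wreathValue (fun c => θ c x) i
  | Sum.inl e => by simp [wreathCharacter, tensorSquare, wreathDiagonal, wreathValue, sq]
  | Sum.inr p => by
    simp only [wreathCharacter, inducedTensor, wreathDiagonal, wreathValue, MonoidHom.coe_mk,
      OneHom.coe_mk, if_true]
    ring

theorem sum_wreathCharacter_mul {D : Type} [Group D] [Fintype D] [Fintype (D ≀ᵣ ℤˣ)]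
    {ι : Type*} [LinearOrder ι] {θ : ι → D → ℤ}
    (hθ : ∀ c d, ∑ g, θ c g * θ d g = if c = d then (Nat.card D : ℤ) else 0)
    (i j : WreathIndex ι) : ∑ g, wreathCharacter θ i g * wreathCharacter θ j g =
      if i = j then (Nat.card (D ≀ᵣ ℤˣ) : ℤ) else 0 := by
  have hcard : (Nat.card (D ≀ᵣ ℤˣ) : ℤ) = 2 * (Nat.card D * Nat.card D) := by
    rw [RegularWreathProduct.card, Nat.card_eq_fintype_card (α := ℤˣ), Fintype.card_units_int]
    push_cast
    ring
  have hmixed (e : ι × Bool) (p : {p : ι × ι // p.1 < p.2}) :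
      ∑ g, wreathCharacter θ (Sum.inl e) g * wreathCharacter θ (Sum.inr p) g = 0 := by
    have hp : ¬ (e.1 = p.1.1 ∧ e.1 = p.1.2) := fun h => p.2.ne (h.1.symm.trans h.2)
    simp only [wreathCharacter, sum_tensorSquare_mul_inducedTensor, hθ, ite_zero_mul_ite_zero,
      if_neg hp, mul_zero]
  rcases i with ⟨c, s⟩ | ⟨⟨a, b⟩, hab⟩ <;> rcases j with ⟨d, t⟩ | ⟨⟨a', b'⟩, hab'⟩
  · simp only [wreathCharacter, sum_tensorSquare_mul_tensorSquare, hθ, hcard,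
      ← Nat.card_eq_fintype_card (α := D), Sum.inl.injEq, Prod.mk.injEq]
    rcases eq_or_ne c d with rfl | h
    · cases s <;> cases t <;> simp <;> ring
    · simp [h]
  · rw [hmixed, if_neg Sum.inl_ne_inr]
  · simp only [mul_comm (wreathCharacter θ (Sum.inr _) _), hmixed, if_neg Sum.inr_ne_inl]
  · have hswap : ¬ (a = b' ∧ b = a') := by
      rintro ⟨rfl, rfl⟩
      exact lt_asymm hab hab'
    simp only [wreathCharacter, sum_inducedTensor_mul_inducedTensor, hθ, hcard,
      ite_zero_mul_ite_zero, if_neg hswap, Sum.inr.injEq, Subtype.mk.injEq, Prod.mk.injEq]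
    rw [mul_zero, add_zero, mul_ite, mul_zero]

theorem IsDetecting.wreath {D : Type} [Group D] [Fintype D] [Fintype (D ≀ᵣ ℤˣ)]
    {ι : Type*} [Fintype ι] [LinearOrder ι] {θ : ι → D → ℤ} {x : D} (hθ : IsDetecting x θ) :
    IsDetecting (wreathDiagonal D ℤˣ x) (wreathCharacter θ) where
  mem
    | Sum.inl (c, true) => tensorSquare_mem_virtualPermCharacters (hθ.mem c)
    | Sum.inl (c, false) => tensorSquare_neg_one_mem_virtualPermCharacters
        (tensorSquare_mem_virtualPermCharacters (hθ.mem c))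
    | Sum.inr p => inducedTensor_mem_virtualPermCharacters (hθ.mem _) (hθ.mem _)
  sum_mul i j := by
    convert sum_wreathCharacter_mul (θ := θ) (fun c d => by convert hθ.sum_mul c d) i j
  card_centralizer_le := by
    rw [card_centralizer_wreathDiagonal, Nat.card_eq_fintype_card (α := ℤˣ),
      Fintype.card_units_int]
    simp only [wreathCharacter_wreathDiagonal, sum_wreathValue_sq]
    push_cast
    rw [mul_comm]
    gcongr
    exact hθ.card_centralizer_le

/-! ### The stabilizer of a partition into two blocks -/

theorem apply_eq_mul_of_injective_intUnits {f : ℤˣ → ℤˣ} (hf : Function.Injective f) (q : ℤˣ) :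
    f q = f 1 * q := by
  have hne : f 1 ≠ f (-1) := hf.ne (by decide)
  rcases Int.units_eq_one_or q with rfl | rfl
  · rw [mul_one]
  · rw [mul_neg_one, Int.units_ne_iff_eq_neg.1 hne, neg_neg]

/-- The permutations of `Y` preserving the partition of `Y` into the fibres of `b`. -/
def PreservesFibres {Y Q : Type*} (b : Y → Q) (σ : Equiv.Perm Y) : Prop :=
  ∀ q, ∃ q', σ '' (b ⁻¹' {q}) = b ⁻¹' {q'}

theorem preservesFibres_permCongr {X Y Q : Type*} (e : X ≃ Y) (b : X → Q) (σ : Equiv.Perm X) :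
    PreservesFibres (b ∘ e.symm) (e.permCongr σ) ↔ PreservesFibres b σ := by
  have hfibre (q : Q) : b ∘ e.symm ⁻¹' {q} = e '' (b ⁻¹' {q}) := by
    rw [Set.preimage_comp, Equiv.image_eq_preimage_symm e]
  have himage (q : Q) : e.permCongr σ '' (e '' (b ⁻¹' {q})) = e '' (σ '' (b ⁻¹' {q})) := by
    simp only [Set.image_image, Equiv.permCongr_apply, Equiv.symm_apply_apply]
  simp only [PreservesFibres, hfibre, himage, e.injective.image_injective.eq_iff]

theorem preservesFibres_snd_toPerm {α Q : Type*} [Group Q] (w : Equiv.Perm α ≀ᵣ Q) :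
    PreservesFibres Prod.snd (toPerm (Equiv.Perm α) Q α w) := fun q => ⟨w.right * q, by
  ext y
  rw [Equiv.image_eq_preimage_symm]
  change w.right⁻¹ * y.2 = q ↔ y.2 = w.right * q
  exact inv_mul_eq_iff_eq_mul⟩

theorem exists_toPerm_eq {α : Type*} [Nonempty α] {σ : Equiv.Perm (α × ℤˣ)}
    (hσ : PreservesFibres Prod.snd σ) : ∃ w, toPerm (Equiv.Perm α) ℤˣ α w = σ := by
  choose f hf using hσ
  have hsnd (y : α × ℤˣ) : (σ y).2 = f y.2 := (hf y.2).subset ⟨y, rfl, rfl⟩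
  have hinj : Function.Injective f := fun q r hqr => by
    obtain ⟨a⟩ := ‹Nonempty α›
    obtain ⟨y, hy, h⟩ := (hf r).superset (show σ (a, q) ∈ _ from (hsnd (a, q)).trans hqr)
    rw [← show y.2 = r from hy, σ.injective h]
  have hmul (y : α × ℤˣ) : (σ y).2 = f 1 * y.2 :=
    (hsnd y).trans (apply_eq_mul_of_injective_intUnits hinj y.2)
  have hsymm (y : α × ℤˣ) : (σ.symm y).2 = (f 1)⁻¹ * y.2 := by
    rw [eq_inv_mul_iff_mul_eq, ← hmul, σ.apply_symm_apply]
  let left (q : ℤˣ) : Equiv.Perm α :=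
    { toFun a := (σ (a, (f 1)⁻¹ * q)).1
      invFun a := (σ.symm (a, q)).1
      left_inv a := by
        have h : ((σ (a, (f 1)⁻¹ * q)).1, q) = σ (a, (f 1)⁻¹ * q) :=
          Prod.ext rfl ((hmul _).trans (mul_inv_cancel_left _ _)).symm
        exact congrArg Prod.fst (σ.symm_apply_eq.2 h)
      right_inv a := by
        have h : ((σ.symm (a, q)).1, (f 1)⁻¹ * q) = σ.symm (a, q) :=
          Prod.ext rfl (hsymm (a, q)).symm
        exact congrArg Prod.fst (σ.eq_symm_apply.1 h) }
  refine ⟨⟨left, f 1⟩, Equiv.ext fun y => Prod.ext ?_ (hmul y).symm⟩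
  change (σ (y.1, (f 1)⁻¹ * (f 1 * y.2))).1 = _
  rw [inv_mul_cancel_left]

theorem nonempty_mulEquiv_wreath {α Y : Type*} [Nonempty α] (e : α × ℤˣ ≃ Y)
    {H : Subgroup (Equiv.Perm Y)}
    (hH : ∀ σ, σ ∈ H ↔ PreservesFibres (Prod.snd ∘ e.symm) σ) :
    Nonempty (Equiv.Perm α ≀ᵣ ℤˣ ≃* H) := by
  let φ : Equiv.Perm α ≀ᵣ ℤˣ →* Equiv.Perm Y :=
    e.permCongrHom.toMonoidHom.comp (toPerm (Equiv.Perm α) ℤˣ α)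
  have hφ : Function.Injective φ :=
    e.permCongrHom.injective.comp (toPermInj (Equiv.Perm α) ℤˣ α)
  have hrange : φ.range = H := by
    ext σ
    obtain ⟨τ, rfl⟩ := e.permCongrHom.surjective σ
    rw [hH, MonoidHom.mem_range]
    refine Iff.trans ?_ (preservesFibres_permCongr e _ τ).symm
    refine ⟨?_, fun hτ => ?_⟩
    · rintro ⟨w, hw⟩
      rw [← e.permCongrHom.injective hw]
      exact preservesFibres_snd_toPerm w
    · obtain ⟨w, rfl⟩ := exists_toPerm_eq hτ
      exact ⟨w, rfl⟩
  exact ⟨(MonoidHom.ofInjective hφ).trans (MulEquiv.subgroupCongr hrange)⟩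

theorem comp_mem_irrCoprime {G G' : Type} [Group G] [Group G'] (e : G' ≃* G) {p : ℕ} {χ : G → ℂ}
    (hχ : χ ∈ IrrCoprime p G) : χ ∘ e ∈ IrrCoprime p G' := by
  obtain ⟨V, _, rfl, hV⟩ := hχ
  exact ⟨(Action.resEquiv (FGModuleCat ℂ) e).functor.obj V, CategoryTheory.simple_obj _ V, rfl, hV⟩

/-- An isomorphism of groups induces a bijection of their irreducible characters of degree prime
to `p`. -/
def irrCoprimeCongr {G G' : Type} [Group G] [Group G'] (e : G ≃* G') (p : ℕ) :
    IrrCoprime p G ≃ IrrCoprime p G' where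
  toFun χ := ⟨χ.1 ∘ e.symm, comp_mem_irrCoprime e.symm χ.2⟩
  invFun χ := ⟨χ.1 ∘ e, comp_mem_irrCoprime e χ.2⟩
  left_inv χ := Subtype.ext (by ext; simp)
  right_inv χ := Subtype.ext (by ext; simp)

theorem preservesFibres_finProdFinEquiv_iff {n m : ℕ} {Q : Type*} (ε : Fin n ≃ Q)
    (σ : Equiv.Perm (Fin (n * m))) :
    PreservesFibres (fun i => ε (finProdFinEquiv.symm i).1) σ ↔
      ∀ r : ℕ, r < n → ∃ r' : ℕ, r' < n ∧
        σ '' {i : Fin (n * m) | (i : ℕ) / m = r} = {i : Fin (n * m) | (i : ℕ) / m = r'} := by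
  have hfibre (r : Fin n) : (fun i : Fin (n * m) => ε (finProdFinEquiv.symm i).1) ⁻¹' {ε r} =
      {i : Fin (n * m) | (i : ℕ) / m = r} := by
    ext i
    exact ε.injective.eq_iff.trans Fin.ext_iff
  rw [PreservesFibres, ← ε.forall_congr_right]
  simp_rw [← ε.exists_congr_right, hfibre, Fin.forall_iff, Fin.exists_iff, exists_prop]

theorem nonempty_mulEquiv_wreath_of_forall_lt_two {m : ℕ} [NeZero m]
    {H : Subgroup (Equiv.Perm (Fin (2 * m)))}
    (hH : ∀ σ : Equiv.Perm (Fin (2 * m)), σ ∈ H ↔ ∀ r : ℕ, r < 2 → ∃ r' : ℕ, r' < 2 ∧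
      σ '' {i : Fin (2 * m) | (i : ℕ) / m = r} = {i : Fin (2 * m) | (i : ℕ) / m = r'}) :
    Nonempty (Equiv.Perm (Unit × ZMod m) ≀ᵣ ℤˣ ≃* H) := by
  let ε : Fin 2 ≃ ℤˣ := Fintype.equivOfCardEq (by decide)
  let κ : Unit × ZMod m ≃ Fin m := Fintype.equivOfCardEq (by simp)
  let e : (Unit × ZMod m) × ℤˣ ≃ Fin (2 * m) :=
    (Equiv.prodComm _ _).trans ((ε.symm.prodCongr κ).trans finProdFinEquiv)
  exact nonempty_mulEquiv_wreath e fun σ =>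
    (hH σ).trans (preservesFibres_finProdFinEquiv_iff ε σ).symm

/-! ### The bijection -/

theorem nonempty_wreathIndex_equiv_irrCoprime_wreath {p : ℕ} (hp : p.Prime) (hp2 : p ≠ 2) (k : ℕ)
    [NeZero (p ^ k)] : Nonempty (WreathIndex (Fin (p ^ k)) ≃
      IrrCoprime p (Equiv.Perm (Unit × ZMod (p ^ k)) ≀ᵣ ℤˣ)) := by
  have hone : ¬ (p : ℤ) ∣ 1 := (Nat.prime_iff_prime_int.1 hp).not_dvd_one
  have : Fintype (Equiv.Perm (Unit × ZMod (p ^ k)) ≀ᵣ ℤˣ) := Fintype.ofFinite _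
  refine isDetecting_hook.wreath.nonempty_equiv_irrCoprime hp (k := k) ?_ fun i => ?_
  · rw [← map_pow, blockShift_pow_self, map_one]
  · rw [wreathCharacter_wreathDiagonal]
    simp only [determinantalCharacter_hook]
    exact not_dvd_wreathValue hp hp2 (fun _ => hone) i

theorem nonempty_wreathIndex_equiv_irrCoprime_perm {p : ℕ} (hp : p.Prime) (hp2 : p ≠ 2) (k : ℕ)
    [NeZero (p ^ k)] : Nonempty (WreathIndex (Fin (p ^ k)) ≃
      IrrCoprime p (Equiv.Perm (Bool × ZMod (p ^ k)))) := by
  have hone : ¬ (p : ℤ) ∣ 1 := (Nat.prime_iff_prime_int.1 hp).not_dvd_one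
  refine isDetecting_movedBeads.nonempty_equiv_irrCoprime hp (k := k) blockShift_pow_self
    fun x => ?_
  rw [determinantalCharacter_movedBeads]
  exact not_dvd_wreathValue hp hp2 (fun _ => hone) x

theorem global_bijection_two_three_pow_general {p : ℕ} (hp : p.Prime) (hp2 : p ≠ 2) (k : ℕ)
    (H : Subgroup (Equiv.Perm (Fin (2 * p ^ k))))
    (hH : ∀ σ : Equiv.Perm (Fin (2 * p ^ k)), σ ∈ H ↔
      ∀ r : ℕ, r < 2 → ∃ r' : ℕ, r' < 2 ∧
        (⇑σ '' {i : Fin (2 * p ^ k) | (i : ℕ) / p ^ k = r}) =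
          {i : Fin (2 * p ^ k) | (i : ℕ) / p ^ k = r'}) :
    Nonempty ((IrrCoprime p (Equiv.Perm (Fin (2 * p ^ k)))) ≃ (IrrCoprime p ↥H)) := by
  have : NeZero (p ^ k) := ⟨pow_ne_zero k hp.ne_zero⟩
  obtain ⟨toPerm⟩ := nonempty_wreathIndex_equiv_irrCoprime_perm hp hp2 k
  obtain ⟨toWreath⟩ := nonempty_wreathIndex_equiv_irrCoprime_wreath hp hp2 k
  obtain ⟨wreathEquiv⟩ := nonempty_mulEquiv_wreath_of_forall_lt_two hH
  let points : Bool × ZMod (p ^ k) ≃ Fin (2 * p ^ k) := Fintype.equivOfCardEq (by simp)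
  exact ⟨(irrCoprimeCongr points.permCongrHom p).symm.trans <| toPerm.symm.trans <|
    toWreath.trans <| irrCoprimeCongr wreathEquiv p⟩

/-- For `k ≥ 1`, let `H ≤ S_{2·3^k}` be the stabilizer of the partition of `{0,…,2·3^k-1}`
into the two consecutive blocks of size `3^k` (the block of `i` being `i / 3^k`), so that
`H ≅ S_{3^k} ≀ S_2`.  Then there is a bijection between `Irr_{3'}(S_{2·3^k})` and
`Irr_{3'}(H)`. -/
theorem global_bijection_two_three_pow (k : ℕ) (hk : 1 ≤ k)
    (H : Subgroup (Equiv.Perm (Fin (2 * 3 ^ k))))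
    (hH : ∀ σ : Equiv.Perm (Fin (2 * 3 ^ k)), σ ∈ H ↔
      ∀ r : ℕ, r < 2 → ∃ r' : ℕ, r' < 2 ∧
        (⇑σ '' {i : Fin (2 * 3 ^ k) | (i : ℕ) / 3 ^ k = r}) =
          {i : Fin (2 * 3 ^ k) | (i : ℕ) / 3 ^ k = r'}) :
    Nonempty ((IrrCoprime 3 (Equiv.Perm (Fin (2 * 3 ^ k)))) ≃ (IrrCoprime 3 ↥H)) :=
  global_bijection_two_three_pow_general Nat.prime_three (by decide) k H hH
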